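/- Let M be a complete Riemannian manifold isometrically immersed as a submanifold of a space form, and let ν₁ be a parallel sub-bundle of the normal bundle of M (parallel with respect to the normal connection). Define the generalized nullity distribution 𝒩¹_p = {v ∈ T_pM : A_ξ v = 0 for all ξ ∈ ν₁(p)}, the common kernel of the shape operators of vectors in ν₁. Then every maximal integral manifold of 𝒩¹ through a point where dim 𝒩¹_p attains its minimal value over M is a complete Riemannian manifold with the induced metric. -/

import Mathlib

noncomputable section

open Set

/-- The three model space forms: Euclidean space, the round sphere, hyperbolic space. -/
inductive SpaceFormKind : Type
  | euclidean : SpaceFormKind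
  | sphere : SpaceFormKind
  | hyperbolic : SpaceFormKind

/-- The sign of the `i`-th coordinate in the ambient bilinear form: for the hyperbolic case the
ambient linear space is the Lorentz space `ℝ^{D-1,1}` whose last coordinate is timelike. -/
def formSign (k : SpaceFormKind) (D : ℕ) (i : Fin D) : ℝ :=
  match k with
  | .hyperbolic => if (i : ℕ) + 1 = D then -1 else 1
  | _ => 1

/-- The ambient bilinear form: the Euclidean inner product in the euclidean and spherical cases,
the Lorentz (Minkowski) form in the hyperbolic case. -/
def aForm (k : SpaceFormKind) {D : ℕ} (x y : EuclideanSpace ℝ (Fin D)) : ℝ :=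
  ∑ i, formSign k D i * x i * y i

/-- The space form, realized inside its ambient linear space: all of `ℝ^D`, the unit sphere,
or the hyperboloid model of hyperbolic space in Lorentz space. -/
def spaceForm (k : SpaceFormKind) (D : ℕ) : Set (EuclideanSpace ℝ (Fin D)) :=
  match k with
  | .euclidean => Set.univ
  | .sphere => {x | aForm .sphere x x = 1}
  | .hyperbolic => {x | aForm .hyperbolic x x = -1 ∧ ∀ i : Fin D, (i : ℕ) + 1 = D → 0 < x i}

/-- The normal space of the space form itself inside the ambient linear space at a point `p`:
trivial in the euclidean case, and spanned by the position vector in the other two cases. -/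
def radialAt (k : SpaceFormKind) {D : ℕ} (p : EuclideanSpace ℝ (Fin D)) :
    Submodule ℝ (EuclideanSpace ℝ (Fin D)) :=
  match k with
  | .euclidean => ⊥
  | _ => Submodule.span ℝ {p}

/-- The tangent space of a subset `S ⊆ ℝ^D` at `p`: the span of all velocities at `0` of smooth
curves inside `S` passing through `p` at time `0`. -/
def TangentAt {D : ℕ} (S : Set (EuclideanSpace ℝ (Fin D))) (p : EuclideanSpace ℝ (Fin D)) :
    Submodule ℝ (EuclideanSpace ℝ (Fin D)) :=
  Submodule.span ℝ {v | ∃ c : ℝ → EuclideanSpace ℝ (Fin D),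
    ContDiff ℝ (⊤ : ℕ∞) c ∧ (∀ t, c t ∈ S) ∧ c 0 = p ∧ deriv c 0 = v}

/-- `φ : U → ℝ^D` is a (smooth, embedded) local parametrization of `S` around `p`. -/
structure IsLocalParam {D : ℕ} (S : Set (EuclideanSpace ℝ (Fin D))) (n : ℕ)
    (φ : EuclideanSpace ℝ (Fin n) → EuclideanSpace ℝ (Fin D))
    (U : Set (EuclideanSpace ℝ (Fin n))) (p : EuclideanSpace ℝ (Fin D)) : Prop where
  isOpen : IsOpen U
  smooth : ContDiffOn ℝ (⊤ : ℕ∞) φ U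
  immersion : ∀ x ∈ U, Function.Injective (fderivWithin ℝ φ U x)
  injOn : Set.InjOn φ U
  openImage : ∃ V, IsOpen V ∧ φ '' U = S ∩ V
  mem : p ∈ φ '' U
  embedding : ∃ ψ, ContinuousOn ψ (φ '' U) ∧ ∀ x ∈ U, ψ (φ x) = x

/-- `S ⊆ ℝ^D` is an `n`-dimensional smooth embedded submanifold. -/
def IsSubmanifold {D : ℕ} (S : Set (EuclideanSpace ℝ (Fin D))) (n : ℕ) : Prop :=
  ∀ p ∈ S, ∃ φ U, IsLocalParam S n φ U p

/-- The nullity space at `p` of the second fundamental form `α` of `S`, viewed as a submanifold of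
the space form of kind `k`:  a tangent vector `v` is in the nullity iff `α(v, w) = 0` for all
`w ∈ T_pS`; concretely, iff for every smooth tangent vector field `W` along a smooth curve `c` in
`S` with `c(0) = p`, `c'(0) = v`, the derivative `W'(0)` has no component normal to `S` inside the
space form, i.e. `W'(0)` lies in the sum of `T_pS` and the normal space of the space form itself. -/
def nullityAt (k : SpaceFormKind) {D : ℕ} (S : Set (EuclideanSpace ℝ (Fin D)))
    (p : EuclideanSpace ℝ (Fin D)) : Set (EuclideanSpace ℝ (Fin D)) :=
  {v | v ∈ TangentAt S p ∧ ∀ c W : ℝ → EuclideanSpace ℝ (Fin D),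
    ContDiff ℝ (⊤ : ℕ∞) c → (∀ t, c t ∈ S) → c 0 = p → deriv c 0 = v →
    ContDiff ℝ (⊤ : ℕ∞) W → (∀ t, W t ∈ TangentAt S (c t)) →
    deriv W 0 ∈ TangentAt S p ⊔ radialAt k p}

/-- The index of nullity of `S` at `p`. -/
def nullityIndex (k : SpaceFormKind) {D : ℕ} (S : Set (EuclideanSpace ℝ (Fin D)))
    (p : EuclideanSpace ℝ (Fin D)) : ℕ :=
  Set.finrank ℝ (nullityAt k S p)

/-- `γ : ℝ → ℝ^D` is a geodesic of the Riemannian (resp. Lorentzian-induced) submanifold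
`S` of the space form of kind `k`: a smooth curve in `S` whose acceleration is orthogonal,
with respect to the ambient bilinear form, to all tangent spaces of `S`. -/
structure IsGeodesicOn (k : SpaceFormKind) {D : ℕ} (S : Set (EuclideanSpace ℝ (Fin D)))
    (γ : ℝ → EuclideanSpace ℝ (Fin D)) : Prop where
  smooth : ContDiff ℝ (⊤ : ℕ∞) γ
  mem : ∀ t, γ t ∈ S
  accel_normal : ∀ t, ∀ v ∈ TangentAt S (γ t), aForm k (deriv (deriv γ) t) v = 0

/-- `S` is a (geodesically, equivalently metrically) complete Riemannian manifold: every
initial condition gives rise to a geodesic defined on all of `ℝ`. -/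
def GeodComplete (k : SpaceFormKind) {D : ℕ} (S : Set (EuclideanSpace ℝ (Fin D))) : Prop :=
  ∀ p ∈ S, ∀ v ∈ TangentAt S p, ∃ γ, IsGeodesicOn k S γ ∧ γ 0 = p ∧ deriv γ 0 = v

/-- The set of points of `S` where the index of nullity is minimal. -/
def minNullitySet (k : SpaceFormKind) {D : ℕ} (S : Set (EuclideanSpace ℝ (Fin D))) :
    Set (EuclideanSpace ℝ (Fin D)) :=
  {q | q ∈ S ∧ ∀ r ∈ S, nullityIndex k S q ≤ nullityIndex k S r}

/-- The maximal integral manifold (leaf) through `p` of the nullity distribution of `S`,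
restricted to the subset `A`: all points reachable from `p` by smooth curves inside `A`
everywhere tangent to the nullity distribution. -/
def leafThrough (k : SpaceFormKind) {D : ℕ} (S A : Set (EuclideanSpace ℝ (Fin D)))
    (p : EuclideanSpace ℝ (Fin D)) : Set (EuclideanSpace ℝ (Fin D)) :=
  {q | ∃ c : ℝ → EuclideanSpace ℝ (Fin D), ContDiff ℝ (⊤ : ℕ∞) c ∧ (∀ t, c t ∈ A) ∧
    (∀ t, deriv c t ∈ nullityAt k S (c t)) ∧ c 0 = p ∧ c 1 = q}

/-- The dimension of the ambient linear space: `n + k` for a submanifold `M^n ⊆ ℝ^{n+k}`,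
`n + k + 1` for `M^n ⊆ S^{n+k} ⊆ ℝ^{n+k+1}` and for `M^n ⊆ H^{n+k} ⊆ ℝ^{n+k,1}`. -/
def ambientDim (k : SpaceFormKind) (n codim : ℕ) : ℕ :=
  match k with
  | .euclidean => n + codim
  | _ => n + codim + 1

/-- `v` is a normal vector of `S` at `p` inside the space form of kind `k`: it is tangent to the
space form and orthogonal (for the ambient form) to the tangent space of `S`. -/
def IsNormalVec (k : SpaceFormKind) {D : ℕ} (S : Set (EuclideanSpace ℝ (Fin D)))
    (p v : EuclideanSpace ℝ (Fin D)) : Prop :=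
  v ∈ TangentAt (spaceForm k D) p ∧ ∀ w ∈ TangentAt S p, aForm k v w = 0

/-- `ν₁` is a rank `m` smooth sub-bundle of the normal bundle of the submanifold `S` of the space
form of kind `k`, which is parallel with respect to the normal connection, i.e. invariant under
normal parallel transport (a normal field `ξ` along a curve is normal-parallel iff its derivative
has no component normal to `S` inside the space form, i.e. `ξ' ∈ T S ⊔ radial`). -/
structure IsParallelNormalSubbundle (k : SpaceFormKind) {D : ℕ}
    (S : Set (EuclideanSpace ℝ (Fin D)))
    (ν₁ : EuclideanSpace ℝ (Fin D) → Submodule ℝ (EuclideanSpace ℝ (Fin D))) (m : ℕ) : Prop where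
  normal : ∀ p ∈ S, ∀ v ∈ ν₁ p, IsNormalVec k S p v
  rank : ∀ p ∈ S, Module.finrank ℝ (ν₁ p) = m
  smooth : ∀ p ∈ S, ∃ V ∈ nhds p,
    ∃ ξ : Fin m → (EuclideanSpace ℝ (Fin D) → EuclideanSpace ℝ (Fin D)),
      (∀ i, ContDiff ℝ (⊤ : ℕ∞) (ξ i)) ∧ ∀ q ∈ V ∩ S, ν₁ q = Submodule.span ℝ (Set.range fun i => ξ i q)
  parallel : ∀ c ξ : ℝ → EuclideanSpace ℝ (Fin D), ContDiff ℝ (⊤ : ℕ∞) c → (∀ t, c t ∈ S) →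
    ContDiff ℝ (⊤ : ℕ∞) ξ → (∀ t, IsNormalVec k S (c t) (ξ t)) →
    (∀ t, deriv ξ t ∈ TangentAt S (c t) ⊔ radialAt k (c t)) →
    ξ 0 ∈ ν₁ (c 0) → ∀ t, ξ t ∈ ν₁ (c t)

/-- The generalized nullity space `𝒩¹_p` associated to the normal sub-bundle `ν₁`: the common
kernel of the shape operators `A_ξ`, `ξ ∈ ν₁(p)`.  Concretely, a tangent vector `v` lies in
`𝒩¹_p` iff for every smooth tangent field `W` along a smooth curve `c` in `S` with `c(0) = p`,
`c'(0) = v`, one has `⟨α(v, W(0)), ξ⟩ = ⟨W'(0), ξ⟩ = 0` for all `ξ ∈ ν₁(p)`. -/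
def gNullityAt (k : SpaceFormKind) {D : ℕ} (S : Set (EuclideanSpace ℝ (Fin D)))
    (ν₁ : EuclideanSpace ℝ (Fin D) → Submodule ℝ (EuclideanSpace ℝ (Fin D)))
    (p : EuclideanSpace ℝ (Fin D)) : Set (EuclideanSpace ℝ (Fin D)) :=
  {v | v ∈ TangentAt S p ∧ ∀ c W : ℝ → EuclideanSpace ℝ (Fin D),
    ContDiff ℝ (⊤ : ℕ∞) c → (∀ t, c t ∈ S) → c 0 = p → deriv c 0 = v →
    ContDiff ℝ (⊤ : ℕ∞) W → (∀ t, W t ∈ TangentAt S (c t)) →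
    ∀ ξ ∈ ν₁ p, aForm k (deriv W 0) ξ = 0}

/-- The set of points of `S` where the dimension of the generalized nullity space is minimal. -/
def gMinNullitySet (k : SpaceFormKind) {D : ℕ} (S : Set (EuclideanSpace ℝ (Fin D)))
    (ν₁ : EuclideanSpace ℝ (Fin D) → Submodule ℝ (EuclideanSpace ℝ (Fin D))) :
    Set (EuclideanSpace ℝ (Fin D)) :=
  {q | q ∈ S ∧ ∀ r ∈ S, Set.finrank ℝ (gNullityAt k S ν₁ q) ≤ Set.finrank ℝ (gNullityAt k S ν₁ r)}

/-- The maximal integral manifold (leaf) through `p` of the generalized nullity distribution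
`𝒩¹`, restricted to the subset `A`. -/
def gLeafThrough (k : SpaceFormKind) {D : ℕ} (S : Set (EuclideanSpace ℝ (Fin D)))
    (ν₁ : EuclideanSpace ℝ (Fin D) → Submodule ℝ (EuclideanSpace ℝ (Fin D)))
    (A : Set (EuclideanSpace ℝ (Fin D))) (p : EuclideanSpace ℝ (Fin D)) :
    Set (EuclideanSpace ℝ (Fin D)) :=
  {q | ∃ c : ℝ → EuclideanSpace ℝ (Fin D), ContDiff ℝ (⊤ : ℕ∞) c ∧ (∀ t, c t ∈ A) ∧
    (∀ t, deriv c t ∈ gNullityAt k S ν₁ (c t)) ∧ c 0 = p ∧ c 1 = q}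

/-!
Locally, a frame of `ν₁` is a map `X` from the base to a fixed vector space. Since `ν₁` is parallel,
the derivative of `X` is tangent to the submanifold up to a section of `ν₁`, and a normalization
`L ∘ X = id` makes the nullity the kernel of the differential `dX`.

Differentiating the symmetry of the second fundamental form shows that the geodesic spray is
tangent to this kernel bundle wherever its rank is locally minimal, so a geodesic that starts in the
bundle stays in it for some time. To see that the rank does not jump up in the limit, vary the
geodesic through solutions of the geodesic equation in the kernel bundle: for the resulting Jacobi
fields `J`, which solve a linear equation and hence extend to the limit, `dX(J)` is constant, so the
range of `dX` does not lose dimension. The set of times at which the geodesic is tangent to the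
nullity at a point of minimal rank is thus open and closed.
-/

namespace GeneralizedNullity

open Filter Topology Asymptotics Module
open scoped ContDiff

local notation "𝔼" d:max => EuclideanSpace ℝ (Fin d)

/-! ### Families of linear maps of locally constant rank -/

section ConstantRank

variable {V Z : Type*} [NormedAddCommGroup V] [NormedSpace ℝ V] [FiniteDimensional ℝ V]
  [NormedAddCommGroup Z] [NormedSpace ℝ Z]

theorem finrank_ker_eventually_le {Y : Type*} [TopologicalSpace Y] {Θ : Y → V →L[ℝ] Z} {x₀ : Y}
    (hΘ : ContinuousAt Θ x₀) :
    ∀ᶠ y in 𝓝 x₀, finrank ℝ (Θ y).ker ≤ finrank ℝ (Θ x₀).ker := by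
  have h_open := isOpen_setOfPred_nat_le_rank (𝕜 := ℝ) (E := V) (F := Z) (finrank ℝ (Θ x₀).range)
  have h_mem : ((finrank ℝ (Θ x₀).range : ℕ) : Cardinal) ≤ (Θ x₀ : V →ₗ[ℝ] Z).rank :=
    (finrank_eq_rank ℝ (Θ x₀).range).le
  filter_upwards [hΘ (h_open.mem_nhds h_mem)] with y hy
  have h_range : finrank ℝ (Θ x₀).range ≤ finrank ℝ (Θ y).range := by
    have hy' : ((finrank ℝ (Θ x₀).range : ℕ) : Cardinal) ≤ (Θ y : V →ₗ[ℝ] Z).rank := hy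
    rw [LinearMap.rank, ← finrank_eq_rank] at hy'
    exact_mod_cast hy'
  have := (Θ x₀ : V →ₗ[ℝ] Z).finrank_range_add_finrank_ker
  have := (Θ y : V →ₗ[ℝ] Z).finrank_range_add_finrank_ker
  omega

theorem eventually_isLocalMin_finrank_ker {Y : Type*} [TopologicalSpace Y]
    {Θ : Y → V →L[ℝ] Z} {x₀ : Y} (hΘ : ContinuousAt Θ x₀)
    (hmin : IsLocalMin (fun y => finrank ℝ (Θ y).ker) x₀) :
    ∀ᶠ y in 𝓝 x₀, IsLocalMin (fun y => finrank ℝ (Θ y).ker) y := by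
  filter_upwards [(finrank_ker_eventually_le hΘ).eventually_nhds, hmin.eventually_nhds]
    with y hle hge
  filter_upwards [hge] with x hx
  exact hle.self_of_nhds.trans hx

theorem exists_genInverse [FiniteDimensional ℝ Z] (A : V →L[ℝ] Z) :
    ∃ G : Z →L[ℝ] V, ∀ v, A (G (A v)) = A v := by
  obtain ⟨g, hg⟩ := (A : V →ₗ[ℝ] Z).rangeRestrict.exists_rightInverse_of_surjective
    (LinearMap.range_rangeRestrict _)
  obtain ⟨G, hG⟩ := LinearMap.exists_extend g
  refine ⟨G.toContinuousLinearMap, fun v => ?_⟩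
  have hGA : G (A v) = g ⟨A v, v, rfl⟩ := by rw [← hG]; rfl
  simpa [hGA] using congrArg Subtype.val (LinearMap.congr_fun hg ⟨A v, v, rfl⟩)

theorem exists_mem_ker_of_finrank_le {Θ₀ Θ : V →L[ℝ] Z} {M : V →L[ℝ] V}
    (hM : Function.Injective M) (hmaps : ∀ v, Θ v = 0 → Θ₀ (M v) = 0)
    (hle : finrank ℝ Θ₀.ker ≤ finrank ℝ Θ.ker) {w : V} (hw : Θ₀ w = 0) :
    ∃ v, Θ v = 0 ∧ M v = w := by
  have h_le : Θ.ker.map (M : V →ₗ[ℝ] V) ≤ Θ₀.ker := by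
    rintro _ ⟨v, hv, rfl⟩
    exact hmaps v hv
  have h_eq := Submodule.eq_of_le_of_finrank_le h_le
    (hle.trans (Submodule.equivMapOfInjective (M : V →ₗ[ℝ] V) hM Θ.ker).finrank_eq.le)
  obtain ⟨v, hv, hvw⟩ : w ∈ Θ.ker.map (M : V →ₗ[ℝ] V) := h_eq ▸ hw
  exact ⟨v, hv, hvw⟩

theorem exists_contDiffAt_genInverse [FiniteDimensional ℝ Z] {Y : Type*}
    [NormedAddCommGroup Y] [NormedSpace ℝ Y] {n : WithTop ℕ∞}
    {Θ : Y → V →L[ℝ] Z} {x₀ : Y} (hΘ : ContDiffAt ℝ n Θ x₀)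
    (hmin : IsLocalMin (fun y => finrank ℝ (Θ y).ker) x₀) :
    ∃ S : Y → Z →L[ℝ] V, ContDiffAt ℝ n S x₀ ∧
      ∀ᶠ y in 𝓝 x₀, ∀ u, Θ y (S y (Θ y u)) = Θ y u := by
  obtain ⟨G, hG⟩ := exists_genInverse (Θ x₀)
  let M : Y → V →L[ℝ] V := fun y => 1 + G.comp (Θ y - Θ x₀)
  have hM₀ : M x₀ = 1 := by simp [M]
  have hM : ContDiffAt ℝ n M x₀ :=
    contDiffAt_const.add (contDiffAt_const.clm_comp (hΘ.sub contDiffAt_const))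
  have h_inv : ContDiffAt ℝ n (fun y => Ring.inverse (M y)) x₀ := by
    have h_ring : ContDiffAt ℝ n Ring.inverse (M x₀) :=
      hM₀ ▸ contDiffAt_ringInverse ℝ (1 : (V →L[ℝ] V)ˣ)
    exact h_ring.comp x₀ hM
  have h_unit : ∀ᶠ y in 𝓝 x₀, IsUnit (M y) :=
    hM.continuousAt (Units.isOpen.mem_nhds (by simp [hM₀]))
  refine ⟨fun y => (Ring.inverse (M y)).comp G, h_inv.clm_comp contDiffAt_const, ?_⟩
  filter_upwards [h_unit, hmin] with y hy hle u
  have h_left : ∀ v, Ring.inverse (M y) (M y v) = v := fun v =>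
    congrArg (fun T : V →L[ℝ] V => T v) (Ring.inverse_mul_cancel _ hy)
  have h_maps : ∀ v, Θ y v = 0 → Θ x₀ (M y v) = 0 := fun v hv => by simp [M, hv, hG]
  -- `M y u - G (Θ y u) = u - G (Θ x₀ u)` lies in `ker Θ x₀ = M y (ker Θ y)`
  obtain ⟨v, hv, hvu⟩ := exists_mem_ker_of_finrank_le (w := u - G (Θ x₀ u))
    (Function.LeftInverse.injective h_left) h_maps hle (by simp [hG])
  have h_split : M y (u - v) = G (Θ y u) := by
    rw [map_sub, hvu]
    simp [M]
  simp [← h_split, h_left, hv]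

end ConstantRank

/-! ### Ordinary differential equations -/

section ODE

variable {E : Type*} [NormedAddCommGroup E] [NormedSpace ℝ E]

theorem eventually_eq_zero_of_deriv_isBigO {f f' : ℝ → E} {t : ℝ}
    (hf : ∀ᶠ s in 𝓝 t, HasDerivAt f (f' s) s) (h₀ : f t = 0) (hO : f' =O[𝓝[≥] t] f) :
    ∀ᶠ s in 𝓝[≥] t, f s = 0 := by
  obtain ⟨K, hK⟩ := hO.bound
  obtain ⟨b, hb, hsub⟩ :=
    mem_nhdsGE_iff_exists_Icc_subset.1 (inter_mem hK (mem_nhdsWithin_of_mem_nhds hf))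
  filter_upwards [Icc_mem_nhdsGE hb] with s hs
  exact eq_zero_of_abs_deriv_le_mul_abs_self_of_eq_zero_right
    (fun r hr => (hsub hr).2.continuousAt.continuousWithinAt)
    (fun r hr => (hsub (Ico_subset_Icc_self hr)).2.hasDerivWithinAt) h₀
    (fun r hr => (hsub (Ico_subset_Icc_self hr)).1) s hs

theorem eq_zero_of_deriv_isBigO {f f' : ℝ → E} {a b : ℝ}
    (hf : ∀ t ∈ Icc a b, ∀ᶠ s in 𝓝 t, HasDerivAt f (f' s) s) (ha : f a = 0)
    (hO : ∀ t ∈ Ico a b, f t = 0 → f' =O[𝓝[≥] t] f) {t : ℝ} (ht : t ∈ Icc a b) : f t = 0 := by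
  have h_cont : ContinuousOn f (Icc a b) := fun s hs =>
    (hf s hs).self_of_nhds.continuousAt.continuousWithinAt
  have h_closed : IsClosed ({s | f s = 0} ∩ Icc a b) := by
    rw [inter_comm]
    exact h_cont.preimage_isClosed_of_isClosed isClosed_Icc isClosed_singleton
  refine h_closed.Icc_subset_of_forall_mem_nhdsWithin ha (fun s ⟨hs₀, hs⟩ => ?_) ht
  exact nhdsWithin_mono s Ioi_subset_Ici_self
    (eventually_eq_zero_of_deriv_isBigO (hf s (Ico_subset_Icc_self hs)) hs₀ (hO s hs hs₀))

theorem isPicardLindelof_linear {A : ℝ → E →L[ℝ] E} {K : NNReal} {b ε : ℝ} (hεK : K * ε ≤ 1 / 4)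
    (hA : ∀ t ∈ Icc (b - ε) (b + ε), ContinuousAt A t ∧ ‖A t‖₊ < K)
    (t₀ : Icc (b - ε) (b + ε)) (y : E) :
    IsPicardLindelof (fun t z => A t z) t₀ y (‖y‖₊ + 1) 0 (K * (2 * ‖y‖₊ + 1)) K where
  lipschitzOnWith t ht := ((A t).lipschitz.weaken (hA t ht).2.le).lipschitzOnWith
  continuousOn _ _ t ht := ((hA t ht).1.clm_apply continuousAt_const).continuousWithinAt
  norm_le t ht z hz := by
    have hz' : ‖z‖ ≤ 2 * ‖y‖ + 1 := by
      have := norm_le_norm_add_norm_sub' z y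
      have := mem_closedBall_iff_norm.1 hz
      push_cast at this
      linarith
    calc ‖A t z‖ ≤ ‖A t‖ * ‖z‖ := (A t).le_opNorm z
      _ ≤ K * (2 * ‖y‖ + 1) := by gcongr; exact_mod_cast (hA t ht).2.le
  mul_max_le := by
    have h_max : max (b + ε - t₀) (t₀ - (b - ε)) ≤ 2 * ε :=
      max_le (by linarith [t₀.2.1]) (by linarith [t₀.2.2])
    push_cast
    calc K * (2 * ‖y‖ + 1) * max (b + ε - t₀) (t₀ - (b - ε))
        ≤ K * (2 * ‖y‖ + 1) * (2 * ε) := by gcongr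
      _ = K * ε * (4 * ‖y‖ + 2) := by ring
      _ ≤ 1 / 4 * (4 * ‖y‖ + 2) := by gcongr
      _ ≤ ‖y‖ + 1 - 0 := by linarith

theorem exists_linear_ode_solution [CompleteSpace E] {A : ℝ → E →L[ℝ] E} {b : ℝ}
    (hA : ∀ᶠ t in 𝓝 b, ContinuousAt A t) :
    ∃ ε > 0, ∀ t₀ ∈ Ioo (b - ε) (b + ε), ∀ y : E, ∃ α : ℝ → E, α t₀ = y ∧
      ∀ t ∈ Ioo (b - ε) (b + ε), HasDerivAt α (A t (α t)) t := by
  have h_bound : ∀ᶠ t in 𝓝 b, ‖A t‖₊ < ‖A b‖₊ + 1 :=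
    hA.self_of_nhds.nnnorm (Iio_mem_nhds (lt_add_one _))
  obtain ⟨δ, hδ, hsub⟩ := Metric.nhds_basis_closedBall.mem_iff.1 (hA.and h_bound)
  set K : NNReal := ‖A b‖₊ + 1
  have hKpos : (0 : ℝ) < K := by positivity
  refine ⟨min δ (1 / (4 * K)), by positivity, fun t₀ ht₀ y => ?_⟩
  set ε := min δ (1 / (4 * K))
  have hεK : K * ε ≤ 1 / 4 := by
    calc K * ε ≤ K * (1 / (4 * K)) := by gcongr; exact min_le_right _ _
      _ = 1 / 4 := by field_simp
  have h_good : ∀ t ∈ Icc (b - ε) (b + ε), ContinuousAt A t ∧ ‖A t‖₊ < K := fun t ht => by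
    refine hsub ?_
    rw [Real.closedBall_eq_Icc]
    exact Icc_subset_Icc (by gcongr; exact min_le_left _ _) (by gcongr; exact min_le_left _ _) ht
  obtain ⟨α, hα₀, hα⟩ := (isPicardLindelof_linear hεK h_good ⟨t₀, Ioo_subset_Icc_self ht₀⟩
    y).exists_eq_forall_mem_Icc_hasDerivWithinAt₀
  exact ⟨α, hα₀, fun t ht =>
    (hα t (Ioo_subset_Icc_self ht)).hasDerivAt (Icc_mem_nhds ht.1 ht.2)⟩

theorem contDiffOn_of_linear_ode {A : ℝ → E →L[ℝ] E} {α : ℝ → E} {s : Set ℝ} (hs : IsOpen s)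
    (hA : ContDiffOn ℝ ∞ A s) (hα : ∀ t ∈ s, HasDerivAt α (A t (α t)) t) :
    ContDiffOn ℝ ∞ α s := by
  rw [contDiffOn_infty]
  intro n
  induction n with
  | zero => exact contDiffOn_zero.2 fun t ht => (hα t ht).continuousAt.continuousWithinAt
  | succ n ih =>
    push_cast
    refine (contDiffOn_succ_iff_deriv_of_isOpen hs).2
      ⟨fun t ht => (hα t ht).differentiableAt.differentiableWithinAt, by simp, ?_⟩
    exact ((contDiffOn_infty.1 hA n).clm_apply ih).congr fun t ht => (hα t ht).deriv

end ODE

theorem real_induction_Ici {P : ℝ → Prop} {a : ℝ} (ha : P a)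
    (h_succ : ∀ t, a ≤ t → P t → ∀ᶠ s in 𝓝[>] t, P s)
    (h_lim : ∀ t, a < t → (∀ s ∈ Ico a t, P s) → P t) {t : ℝ} (ht : a ≤ t) : P t := by
  by_contra h_bad
  set B : Set ℝ := {s | a ≤ s ∧ ¬ P s}
  have hB : BddBelow B := ⟨a, fun s hs => hs.1⟩
  have hBne : B.Nonempty := ⟨t, ht, h_bad⟩
  have h_le : a ≤ sInf B := le_csInf hBne fun s hs => hs.1
  have h_before : ∀ s ∈ Ico a (sInf B), P s := fun s hs =>
    not_not.1 fun hPs => notMem_of_lt_csInf hs.2 hB ⟨hs.1, hPs⟩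
  have h_inf : P (sInf B) := by
    rcases h_le.eq_or_lt with h_eq | h_lt
    · exact h_eq ▸ ha
    · exact h_lim _ h_lt h_before
  obtain ⟨b, hb, hsub⟩ := (mem_nhdsGT_iff_exists_Ioo_subset).1 (h_succ _ h_le h_inf)
  obtain ⟨s, hs, hsb⟩ := exists_lt_of_csInf_lt hBne hb
  rcases (csInf_le hB hs).eq_or_lt with h_eq | h_lt
  · exact hs.2 (h_eq ▸ h_inf)
  · exact hs.2 (hsub ⟨h_lt, hsb⟩)

/-! ### Sprays preserving the kernel of a differential -/

section Kernel

variable {V Z Y W : Type*} [NormedAddCommGroup V] [NormedSpace ℝ V] [FiniteDimensional ℝ V]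
  [NormedAddCommGroup Z] [NormedSpace ℝ Z] [FiniteDimensional ℝ Z]
  [NormedAddCommGroup Y] [NormedSpace ℝ Y] [NormedAddCommGroup W] [NormedSpace ℝ W]
  {Θ : Y → V →L[ℝ] Z} {x₀ : Y} {u₀ : V}

theorem fderiv_apply_mem_range (hΘ : ContDiffAt ℝ 1 Θ x₀)
    (hmin : IsLocalMin (fun y => finrank ℝ (Θ y).ker) x₀) (hu : Θ x₀ u₀ = 0) (w : Y) :
    fderiv ℝ Θ x₀ w u₀ ∈ (Θ x₀).range := by
  obtain ⟨S, hS, hker⟩ := exists_contDiffAt_genInverse hΘ hmin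
  have hΘ' := (hΘ.differentiableAt one_ne_zero).hasFDerivAt
  have h_section : DifferentiableAt ℝ (fun y => u₀ - S y (Θ y u₀)) x₀ :=
    (contDiffAt_const.sub (hS.clm_apply (hΘ.clm_apply contDiffAt_const))).differentiableAt
      one_ne_zero
  have h_zero : HasFDerivAt (fun y => Θ y (u₀ - S y (Θ y u₀))) (0 : Y →L[ℝ] Z) x₀ :=
    (hasFDerivAt_const (0 : Z) x₀).congr_of_eventuallyEq (hker.mono fun y hy => by simp [hy])
  have h_eq := DFunLike.congr_fun ((hΘ'.clm_apply h_section.hasFDerivAt).unique h_zero) w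
  refine ⟨-(fderiv ℝ (fun y => u₀ - S y (Θ y u₀)) x₀ w), ?_⟩
  rw [map_neg, neg_eq_iff_add_eq_zero]
  simpa [hu] using h_eq

/-- Compare `h z` with its value at the point of the kernel bundle over the same base point
obtained from `z` by the smooth generalized inverse. -/
theorem isBigO_of_eq_zero_on_ker {h : Y × V → W} (hΘ : ContDiffAt ℝ 1 Θ x₀)
    (hmin : IsLocalMin (fun y => finrank ℝ (Θ y).ker) x₀) (hu : Θ x₀ u₀ = 0)
    (hh : ContDiffAt ℝ 1 h (x₀, u₀))
    (hzero : ∀ᶠ z in 𝓝 (x₀, u₀), Θ z.1 z.2 = 0 → h z = 0) :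
    h =O[𝓝 (x₀, u₀)] fun z => Θ z.1 z.2 := by
  obtain ⟨S, hS, hker⟩ := exists_contDiffAt_genInverse hΘ hmin
  have hΘ₁ : ContinuousAt (fun z : Y × V => Θ z.1) (x₀, u₀) :=
    hΘ.continuousAt.comp_of_eq continuousAt_fst rfl
  have hS₁ : ContinuousAt (fun z : Y × V => S z.1) (x₀, u₀) :=
    hS.continuousAt.comp_of_eq continuousAt_fst rfl
  let r : Y × V → Y × V := fun z => (z.1, z.2 - S z.1 (Θ z.1 z.2))
  have hr : Tendsto r (𝓝 (x₀, u₀)) (𝓝 (x₀, u₀)) := by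
    have : ContinuousAt r (x₀, u₀) := continuousAt_fst.prodMk
      (continuousAt_snd.sub (hS₁.clm_apply (hΘ₁.clm_apply continuousAt_snd)))
    simpa [ContinuousAt, r, hu] using this
  obtain ⟨K, s, hs, hLip⟩ := hh.exists_lipschitzOnWith
  have h_lip : h =O[𝓝 (x₀, u₀)] fun z => z - r z := by
    refine IsBigO.of_bound K ?_
    filter_upwards [hs, hr hs, hr.eventually hzero, continuousAt_fst.eventually hker]
      with z hz hrz h_r hz_ker
    have h_r_zero : h (r z) = 0 := h_r (by simp [r, hz_ker])
    simpa [h_r_zero, dist_eq_norm] using hLip.dist_le_mul z hz (r z) hrz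
  have h_sub : (fun z => z - r z) =O[𝓝 (x₀, u₀)] fun z => S z.1 (Θ z.1 z.2) :=
    IsBigO.of_bound 1 (Eventually.of_forall fun z => by simp [r, Prod.norm_def])
  have h_S : (fun z : Y × V => S z.1 (Θ z.1 z.2)) =O[𝓝 (x₀, u₀)] fun z => Θ z.1 z.2 := by
    obtain ⟨C, hC⟩ := hS₁.norm.isBoundedUnder_le
    refine IsBigO.of_bound C ((eventually_map.1 hC).mono fun z hz => ?_)
    exact ((S z.1).le_opNorm _).trans (by gcongr)
  exact (h_lip.trans h_sub).trans h_S

end Kernel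

section Variation

variable {E Z W : Type*} [NormedAddCommGroup E] [NormedSpace ℝ E]
  [NormedAddCommGroup Z] [NormedSpace ℝ Z] [NormedAddCommGroup W] [NormedSpace ℝ W]

/-- The derivative of `F` along the vector field `f`. -/
def derivAlong (f : E → E) (F : E → Z) (z : E) : Z := fderiv ℝ F z (f z)

theorem norm_hasFDerivAt_le {F : E → Z} {h : E → W} {F' : E →L[ℝ] Z} {h' : E →L[ℝ] W} {z : E}
    {C : ℝ} (hF : HasFDerivAt F F' z) (hh : HasFDerivAt h h' z) (hz : F z = 0)
    (hle : ∀ᶠ y in 𝓝 z, ‖h y‖ ≤ C * ‖F y‖) (ζ : E) : ‖h' ζ‖ ≤ C * ‖F' ζ‖ := by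
  have hz' : h z = 0 := norm_le_zero_iff.1 (by simpa [hz] using hle.self_of_nhds)
  have h_atTop : Tendsto (fun c : ℝ => ‖c‖) atTop atTop := tendsto_norm_atTop_atTop
  have h_line : Tendsto (fun c : ℝ => z + c⁻¹ • ζ) atTop (𝓝 z) := by
    simpa using ((tendsto_inv_atTop_zero (𝕜 := ℝ)).smul_const ζ).const_add z
  refine le_of_tendsto_of_tendsto (hh.lim ζ h_atTop).norm ((hF.lim ζ h_atTop).norm.const_mul C) ?_
  filter_upwards [h_line.eventually hle] with c hc
  simp only [hz, hz', sub_zero, norm_smul]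
  calc ‖c‖ * ‖h (z + c⁻¹ • ζ)‖ ≤ ‖c‖ * (C * ‖F (z + c⁻¹ • ζ)‖) := by gcongr
    _ = C * (‖c‖ * ‖F (z + c⁻¹ • ζ)‖) := by ring

theorem exists_norm_fderiv_le {F : E → Z} {h : E → W} {z₀ : E} (hO : h =O[𝓝 z₀] F)
    (hF : ∀ᶠ z in 𝓝 z₀, DifferentiableAt ℝ F z) (hh : ∀ᶠ z in 𝓝 z₀, DifferentiableAt ℝ h z) :
    ∃ C, ∀ᶠ z in 𝓝 z₀, F z = 0 → ∀ ζ, ‖fderiv ℝ h z ζ‖ ≤ C * ‖fderiv ℝ F z ζ‖ := by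
  obtain ⟨C, hC⟩ := hO.bound
  refine ⟨C, ?_⟩
  filter_upwards [hF, hh, hC.eventually_nhds] with z hFz hhz hle hz
  exact norm_hasFDerivAt_le hFz.hasFDerivAt hhz.hasFDerivAt hz hle

theorem hasDerivAt_fderiv_along {f : E → E} {F : E → Z} {z ζ : ℝ → E} {t : ℝ}
    (hF : ContDiffAt ℝ 2 F (z t)) (hf : DifferentiableAt ℝ f (z t))
    (hz : HasDerivAt z (f (z t)) t) (hζ : HasDerivAt ζ (fderiv ℝ f (z t) (ζ t)) t) :
    HasDerivAt (fun s => fderiv ℝ F (z s) (ζ s))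
      (fderiv ℝ (derivAlong f F) (z t) (ζ t)) t := by
  have hF' : HasFDerivAt (fderiv ℝ F) (fderiv ℝ (fderiv ℝ F) (z t)) (z t) :=
    ((hF.fderiv_right (m := 1) (by norm_num)).differentiableAt one_ne_zero).hasFDerivAt
  have h_along : HasFDerivAt (derivAlong f F) _ (z t) := hF'.clm_apply hf.hasFDerivAt
  have h_symm : IsSymmSndFDerivAt ℝ F (z t) := hF.isSymmSndFDerivAt (by simp)
  rw [h_along.fderiv]
  simpa [h_symm.eq (f (z t)) (ζ t), add_comm] using (hF'.comp_hasDerivAt t hz).clm_apply hζ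

theorem fderiv_variation_eq_zero {f : E → E} {F : E → Z} {z ζ : ℝ → E} {a b : ℝ} {O : Set E}
    (hO : IsOpen O) (hF : ContDiffOn ℝ 2 F O) (hf : ContDiffOn ℝ 1 f O)
    (hz : ∀ t ∈ Icc a b, z t ∈ O ∧ ∀ᶠ s in 𝓝 t, HasDerivAt z (f (z s)) s)
    (hζ : ∀ t ∈ Icc a b, ∀ᶠ s in 𝓝 t, HasDerivAt ζ (fderiv ℝ f (z s) (ζ s)) s)
    (hFz : ∀ t ∈ Ico a b, F (z t) = 0 ∧ derivAlong f F =O[𝓝 (z t)] F)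
    (ha : fderiv ℝ F (z a) (ζ a) = 0) {t : ℝ} (ht : t ∈ Icc a b) :
    fderiv ℝ F (z t) (ζ t) = 0 := by
  have h_smooth : ∀ y ∈ O, ContDiffAt ℝ 2 F y ∧ ContDiffAt ℝ 1 f y := fun y hy =>
    ⟨hF.contDiffAt (hO.mem_nhds hy), hf.contDiffAt (hO.mem_nhds hy)⟩
  have h_along : ∀ y ∈ O, DifferentiableAt ℝ (derivAlong f F) y := fun y hy =>
    ((((h_smooth y hy).1.fderiv_right (m := 1) (by norm_num)).clm_apply
      (h_smooth y hy).2).differentiableAt one_ne_zero)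
  refine eq_zero_of_deriv_isBigO (f := fun s => fderiv ℝ F (z s) (ζ s))
    (f' := fun s => fderiv ℝ (derivAlong f F) (z s) (ζ s)) (fun s hs => ?_) ha
    (fun s hs _ => ?_) ht
  · have hzs := (hz s hs).2.self_of_nhds.continuousAt
    filter_upwards [(hz s hs).2, hζ s hs, hzs (hO.mem_nhds (hz s hs).1)] with r hzr hζr hr
    exact hasDerivAt_fderiv_along (h_smooth _ hr).1
      ((h_smooth _ hr).2.differentiableAt one_ne_zero) hzr hζr
  · obtain ⟨hzO, hz'⟩ := hz s (Ico_subset_Icc_self hs)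
    have h_nhds : ∀ᶠ y in 𝓝 (z s), y ∈ O := hO.mem_nhds hzO
    obtain ⟨C, hC⟩ := exists_norm_fderiv_le (hFz s hs).2
      (h_nhds.mono fun y hy => (h_smooth y hy).1.differentiableAt two_ne_zero)
      (h_nhds.mono h_along)
    refine IsBigO.of_bound C ?_
    filter_upwards [nhdsWithin_le_nhds (hz'.self_of_nhds.continuousAt.eventually hC),
      Ico_mem_nhdsGE hs.2] with r hr hrb
    exact hr (hFz r ⟨hs.1.trans hrb.1, hrb.2⟩).1 (ζ r)

end Variation

section KernelSpray

variable {V Z : Type*} [NormedAddCommGroup V] [NormedSpace ℝ V]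
  [NormedAddCommGroup Z] [NormedSpace ℝ Z]

/-- The dimension of the kernel of the differential of `G` at `x`. -/
def kerDim (G : V → Z) (x : V) : ℕ := finrank ℝ (fderiv ℝ G x).ker

/-- The first order system on `V × V` equivalent to the second order equation
`x'' = A (x, x')`. -/
def sprayField (A : V × V → V) (z : V × V) : V × V := (z.2, A z)

/-- The differential of `G` as a function on the tangent bundle `V × V`. -/
def tangentDeriv (G : V → Z) (z : V × V) : Z := fderiv ℝ G z.1 z.2

/-- The second order equation `x'' = A (x, x')` on `U` preserves the kernel distribution of the
differential of `G` infinitesimally: on the kernel, where its dimension is locally minimal, the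
second derivative of `G` along solutions vanishes. -/
structure IsKernelSpray (G : V → Z) (A : V × V → V) (U : Set V) : Prop where
  isOpen : IsOpen U
  contDiffOn : ContDiffOn ℝ ∞ G U
  contDiffOn_spray : ContDiffOn ℝ ∞ A (U ×ˢ univ)
  second_deriv_eq_zero : ∀ x ∈ U, IsLocalMin (kerDim G) x → ∀ u, fderiv ℝ G x u = 0 →
    fderiv ℝ (fderiv ℝ G) x u u + fderiv ℝ G x (A (x, u)) = 0

namespace IsKernelSpray

variable {G : V → Z} {A : V × V → V} {U : Set V} (hG : IsKernelSpray G A U)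
include hG

theorem contDiffAt_fderiv {x : V} (hx : x ∈ U) : ContDiffAt ℝ ∞ (fderiv ℝ G) x :=
  (hG.contDiffOn.contDiffAt (hG.isOpen.mem_nhds hx)).fderiv_right (m := ∞) (by simp)

theorem contDiffOn_tangentDeriv : ContDiffOn ℝ ∞ (tangentDeriv G) (U ×ˢ univ) :=
  fun z hz => (((hG.contDiffAt_fderiv hz.1).comp z contDiffAt_fst).clm_apply
    contDiffAt_snd).contDiffWithinAt

theorem contDiffOn_sprayField : ContDiffOn ℝ ∞ (sprayField A) (U ×ˢ univ) :=
  contDiff_snd.contDiffOn.prodMk hG.contDiffOn_spray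

theorem fderiv_tangentDeriv {x : V} (hx : x ∈ U) (u : V) (ζ : V × V) :
    fderiv ℝ (tangentDeriv G) (x, u) ζ =
      fderiv ℝ (fderiv ℝ G) x ζ.1 u + fderiv ℝ G x ζ.2 := by
  have hG' : HasFDerivAt (fun z : V × V => fderiv ℝ G z.1) _ (x, u) :=
    HasFDerivAt.comp (g := fderiv ℝ G) (x, u)
      ((hG.contDiffAt_fderiv hx).differentiableAt (by simp)).hasFDerivAt hasFDerivAt_fst
  have h_deriv : HasFDerivAt (tangentDeriv G) _ (x, u) := hG'.clm_apply hasFDerivAt_snd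
  simp [h_deriv.fderiv, add_comm]

theorem fderiv_fderiv_symm {x : V} (hx : x ∈ U) (u v : V) :
    fderiv ℝ (fderiv ℝ G) x u v = fderiv ℝ (fderiv ℝ G) x v u :=
  ((hG.contDiffOn.contDiffAt (hG.isOpen.mem_nhds hx)).isSymmSndFDerivAt
    (by simp [minSmoothness_of_isRCLikeNormedField, ENat.LEInfty.out])).eq u v

theorem fderiv_sprayField_fst {y : V × V} (hy : y.1 ∈ U) (ζ : V × V) :
    (fderiv ℝ (sprayField A) y ζ).1 = ζ.2 := by
  have h_nhds : U ×ˢ univ ∈ 𝓝 y := (hG.isOpen.prod isOpen_univ).mem_nhds ⟨hy, mem_univ _⟩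
  have h_spray : HasFDerivAt A (fderiv ℝ A y) y :=
    ((hG.contDiffOn_spray.contDiffAt h_nhds).differentiableAt (by simp)).hasFDerivAt
  have h_field : HasFDerivAt (sprayField A) _ y := hasFDerivAt_snd.prodMk h_spray
  rw [h_field.fderiv]
  rfl

/-- Symmetry of the second derivative of `G` exchanges the velocity of `z` and `J = (ζ t).1`. -/
theorem hasDerivAt_fderiv_jacobi {z ζ : ℝ → V × V} {b : ℝ}
    (hz : HasDerivAt z (sprayField A (z b)) b) (hb : (z b).1 ∈ U)
    (hζ : HasDerivAt ζ (fderiv ℝ (sprayField A) (z b) (ζ b)) b) :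
    HasDerivAt (fun t => fderiv ℝ G (z t).1 (ζ t).1)
      (fderiv ℝ (tangentDeriv G) (z b) (ζ b)) b := by
  have hJ : HasDerivAt (fun t => (ζ t).1) (ζ b).2 b := by
    rw [← hG.fderiv_sprayField_fst hb]
    exact (hasFDerivAt_fst (𝕜 := ℝ) (p := ζ b)).comp_hasDerivAt b hζ
  have hx : HasDerivAt (fun t => (z t).1) (z b).2 b :=
    (hasFDerivAt_fst (𝕜 := ℝ) (p := z b)).comp_hasDerivAt b hz
  have hG' : HasDerivAt (fun t => fderiv ℝ G (z t).1) _ b :=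
    ((hG.contDiffAt_fderiv hb).differentiableAt (by simp)).hasFDerivAt.comp_hasDerivAt b hx
  rw [← Prod.mk.eta (p := z b), hG.fderiv_tangentDeriv hb, hG.fderiv_fderiv_symm hb]
  exact hG'.clm_apply hJ

variable [FiniteDimensional ℝ V] [FiniteDimensional ℝ Z]

theorem derivAlong_isBigO {z : V × V} (hz : z.1 ∈ U) (hmin : IsLocalMin (kerDim G) z.1)
    (h₀ : tangentDeriv G z = 0) :
    derivAlong (sprayField A) (tangentDeriv G) =O[𝓝 z] tangentDeriv G := by
  have h_open : IsOpen (U ×ˢ (univ : Set V)) := hG.isOpen.prod isOpen_univ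
  have hzO : U ×ˢ univ ∈ 𝓝 z := h_open.mem_nhds ⟨hz, mem_univ _⟩
  have hΘ := hG.contDiffAt_fderiv hz
  have h_along : ContDiffAt ℝ 1 (derivAlong (sprayField A) (tangentDeriv G)) z :=
    (((hG.contDiffOn_tangentDeriv.contDiffAt hzO).fderiv_right (m := ∞) (by simp)).clm_apply
      (hG.contDiffOn_sprayField.contDiffAt hzO)).of_le (by simp)
  refine isBigO_of_eq_zero_on_ker (hΘ.of_le (by simp)) hmin h₀ h_along ?_
  filter_upwards [hzO, continuousAt_fst.eventually
    (eventually_isLocalMin_finrank_ker hΘ.continuousAt hmin)] with y hyU hy hy₀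
  simpa only [derivAlong, hG.fderiv_tangentDeriv hyU.1, sprayField] using
    hG.second_deriv_eq_zero y.1 hyU.1 hy y.2 hy₀

variable {z : ℝ → V × V} {b : ℝ}

theorem eventually_tangentDeriv_eq_zero
    (hz : ∀ᶠ t in 𝓝 b, HasDerivAt z (sprayField A (z t)) t) (hb : (z b).1 ∈ U)
    (hmin : IsLocalMin (kerDim G) (z b).1) (h₀ : tangentDeriv G (z b) = 0) :
    ∀ᶠ t in 𝓝[≥] b, tangentDeriv G (z t) = 0 := by
  have hz_cont := hz.self_of_nhds.continuousAt
  have hzU : ∀ᶠ t in 𝓝 b, z t ∈ U ×ˢ univ :=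
    hz_cont ((hG.isOpen.prod isOpen_univ).mem_nhds ⟨hb, mem_univ _⟩)
  refine eventually_eq_zero_of_deriv_isBigO
    (f' := fun t => derivAlong (sprayField A) (tangentDeriv G) (z t)) ?_ h₀
    (((hG.derivAlong_isBigO hb hmin h₀).comp_tendsto hz_cont).mono nhdsWithin_le_nhds)
  filter_upwards [hz, hzU] with t hzt htU
  have h_diff := (hG.contDiffOn_tangentDeriv.contDiffAt
    ((hG.isOpen.prod isOpen_univ).mem_nhds htU)).differentiableAt (by simp)
  exact h_diff.hasFDerivAt.comp_hasDerivAt t hzt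

theorem exists_variation_mem_ker {x u : V} (hx : x ∈ U) (hmin : IsLocalMin (kerDim G) x)
    (hu : fderiv ℝ G x u = 0) (w : V) :
    ∃ w', fderiv ℝ (tangentDeriv G) (x, u) (w, w') = 0 := by
  obtain ⟨w', hw'⟩ := fderiv_apply_mem_range ((hG.contDiffAt_fderiv hx).of_le (by simp)) hmin hu w
  refine ⟨-w', ?_⟩
  rw [hG.fderiv_tangentDeriv hx, ← hw']
  simp

theorem apply_mem_range_of_variation {ζ : ℝ → V × V} {a : ℝ} (hab : a ≤ b)
    (hz : ∀ t ∈ Icc a b, (z t).1 ∈ U ∧ ∀ᶠ s in 𝓝 t, HasDerivAt z (sprayField A (z s)) s)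
    (hreg : ∀ t ∈ Ico a b, IsLocalMin (kerDim G) (z t).1 ∧ tangentDeriv G (z t) = 0)
    (hζ : ∀ t ∈ Icc a b, ∀ᶠ s in 𝓝 t, HasDerivAt ζ (fderiv ℝ (sprayField A) (z s) (ζ s)) s)
    (ha : fderiv ℝ (tangentDeriv G) (z a) (ζ a) = 0) :
    fderiv ℝ G (z a).1 (ζ a).1 ∈ (fderiv ℝ G (z b).1).range := by
  have h_tangent : ∀ t ∈ Icc a b, fderiv ℝ (tangentDeriv G) (z t) (ζ t) = 0 := fun t ht =>
    fderiv_variation_eq_zero (hG.isOpen.prod isOpen_univ)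
      (hG.contDiffOn_tangentDeriv.of_le (by simp [ENat.LEInfty.out]))
      (hG.contDiffOn_sprayField.of_le (by simp))
      (fun s hs => ⟨⟨(hz s hs).1, mem_univ _⟩, (hz s hs).2⟩) hζ
      (fun s hs => ⟨(hreg s hs).2, hG.derivAlong_isBigO (hz s (Ico_subset_Icc_self hs)).1
        (hreg s hs).1 (hreg s hs).2⟩) ha ht
  have h_jacobi : ∀ t ∈ Icc a b, HasDerivAt (fun t => fderiv ℝ G (z t).1 (ζ t).1) 0 t :=
    fun t ht => h_tangent t ht ▸ hG.hasDerivAt_fderiv_jacobi (hz t ht).2.self_of_nhds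
      (hz t ht).1 (hζ t ht).self_of_nhds
  exact ⟨(ζ b).1, constant_of_has_deriv_right_zero
    (fun t ht => (h_jacobi t ht).continuousAt.continuousWithinAt)
    (fun t ht => (h_jacobi t (Ico_subset_Icc_self ht)).hasDerivWithinAt) b ⟨hab, le_rfl⟩⟩

/-- A variational field tangent to the kernel bundle at an earlier time survives up to time `b`,
since it solves a linear equation. -/
theorem eventually_range_le_range_limit
    (hz : ∀ᶠ t in 𝓝 b, HasDerivAt z (sprayField A (z t)) t) (hb : (z b).1 ∈ U)
    (hreg : ∀ᶠ t in 𝓝[<] b, IsLocalMin (kerDim G) (z t).1 ∧ tangentDeriv G (z t) = 0) :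
    ∀ᶠ t in 𝓝[<] b, (fderiv ℝ G (z t).1).range ≤ (fderiv ℝ G (z b).1).range := by
  have hzU : ∀ᶠ t in 𝓝 b, (z t).1 ∈ U :=
    hz.self_of_nhds.continuousAt.fst (hG.isOpen.mem_nhds hb)
  have h_cont : ∀ᶠ t in 𝓝 b, ContinuousAt (fun t => fderiv ℝ (sprayField A) (z t)) t := by
    filter_upwards [hz, hzU] with t hzt htU
    exact ((hG.contDiffOn_sprayField.contDiffAt
      ((hG.isOpen.prod isOpen_univ).mem_nhds ⟨htU, mem_univ _⟩)).fderiv_right (m := ∞)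
      (by simp)).continuousAt.comp hzt.continuousAt
  obtain ⟨ε, hε, h_solve⟩ := exists_linear_ode_solution h_cont
  obtain ⟨δ, hδ, hsub⟩ := Metric.eventually_nhds_iff_ball.1 (hzU.and hz.eventually_nhds)
  obtain ⟨l, hl, hlsub⟩ := mem_nhdsLT_iff_exists_Ioo_subset.1 hreg
  filter_upwards [Ioo_mem_nhdsLT hl, Ioo_mem_nhdsLT (sub_lt_self b hε),
    Ioo_mem_nhdsLT (sub_lt_self b hδ)] with a hal haε haδ
  have hz_Icc : ∀ t ∈ Icc a b,
      (z t).1 ∈ U ∧ ∀ᶠ s in 𝓝 t, HasDerivAt z (sprayField A (z s)) s := fun t ht =>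
    hsub t (by rw [Real.ball_eq_Ioo]; exact ⟨haδ.1.trans_le ht.1, by linarith [ht.2]⟩)
  rintro _ ⟨w, rfl⟩
  obtain ⟨w', hw'⟩ := hG.exists_variation_mem_ker (hz_Icc a ⟨le_rfl, hal.2.le⟩).1
    (hlsub hal).1 (hlsub hal).2 w
  obtain ⟨ζ, hζa, hζ⟩ := h_solve a ⟨haε.1, by linarith [haε.2]⟩ (w, w')
  have h_mem := hG.apply_mem_range_of_variation (ζ := ζ) hal.2.le hz_Icc
    (fun t ht => hlsub ⟨hal.1.trans_le ht.1, ht.2⟩)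
    (fun t ht => mem_of_superset
      (Ioo_mem_nhds (haε.1.trans_le ht.1) (by linarith [ht.2])) hζ) (by rwa [hζa])
  rwa [hζa] at h_mem

theorem eventually_kerDim_limit_le
    (hz : ∀ᶠ t in 𝓝 b, HasDerivAt z (sprayField A (z t)) t) (hb : (z b).1 ∈ U)
    (hreg : ∀ᶠ t in 𝓝[<] b, IsLocalMin (kerDim G) (z t).1 ∧ tangentDeriv G (z t) = 0) :
    ∀ᶠ t in 𝓝[<] b, kerDim G (z b).1 ≤ kerDim G (z t).1 := by
  filter_upwards [hG.eventually_range_le_range_limit hz hb hreg] with t ht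
  have := Submodule.finrank_mono ht
  have := (fderiv ℝ G (z t).1 : V →ₗ[ℝ] Z).finrank_range_add_finrank_ker
  have := (fderiv ℝ G (z b).1 : V →ₗ[ℝ] Z).finrank_range_add_finrank_ker
  simp only [kerDim]
  omega

end IsKernelSpray

end KernelSpray

/-! ### Orthogonal projection for an indefinite form -/

section GramOperator

variable {V F Y : Type*} [NormedAddCommGroup V] [NormedSpace ℝ V]
  [NormedAddCommGroup F] [NormedSpace ℝ F] [NormedAddCommGroup Y] [NormedSpace ℝ Y]

/-- Restriction to `V`, along `Φ`, of the functionals of the form `B`. -/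
def restrictForm (B : F →L[ℝ] F →L[ℝ] ℝ) (Φ : V →L[ℝ] F) : F →L[ℝ] V →L[ℝ] ℝ :=
  (ContinuousLinearMap.compL ℝ V F ℝ).flip Φ ∘L B

/-- The inverse of the Gram operator of the form pulled back along `Φ`: it represents functionals
on `V` by vectors. Meaningful when the pulled back form is anisotropic. -/
def riesz (B : F →L[ℝ] F →L[ℝ] ℝ) (Φ : V →L[ℝ] F) : (V →L[ℝ] ℝ) →L[ℝ] V :=
  (restrictForm B Φ ∘L Φ).inverse

/-- The coordinate in `V` of the `B`-orthogonal projection to the range of `Φ`. -/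
def orthCoord (B : F →L[ℝ] F →L[ℝ] ℝ) (Φ : V →L[ℝ] F) : F →L[ℝ] V :=
  riesz B Φ ∘L restrictForm B Φ

@[simp]
theorem restrictForm_apply (B : F →L[ℝ] F →L[ℝ] ℝ) (Φ : V →L[ℝ] F) (f : F) (w : V) :
    restrictForm B Φ f w = B f (Φ w) := rfl

theorem contDiffAt_restrictForm {B : F →L[ℝ] F →L[ℝ] ℝ} {Φ : Y → V →L[ℝ] F} {y : Y}
    {n : WithTop ℕ∞} (hΦ : ContDiffAt ℝ n Φ y) :
    ContDiffAt ℝ n (fun y => restrictForm B (Φ y)) y := by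
  have h_comp : ContDiffAt ℝ n (fun y => (ContinuousLinearMap.compL ℝ V F ℝ).flip (Φ y)) y :=
    (ContinuousLinearMap.contDiff _).contDiffAt.comp y hΦ
  exact h_comp.clm_comp contDiffAt_const

variable {B : F →L[ℝ] F →L[ℝ] ℝ} {Φ : V →L[ℝ] F}

theorem orthCoord_eq_zero {f : F} (hf : ∀ w, B f (Φ w) = 0) : orthCoord B Φ f = 0 := by
  have : restrictForm B Φ f = 0 := ContinuousLinearMap.ext hf
  simp [orthCoord, this]

variable [FiniteDimensional ℝ V]

theorem isInvertible_gram (hpos : ∀ z, z ≠ 0 → B (Φ z) (Φ z) ≠ 0) :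
    (restrictForm B Φ ∘L Φ).IsInvertible := by
  have h_inj : Function.Injective (restrictForm B Φ ∘L Φ : V →ₗ[ℝ] V →L[ℝ] ℝ) := by
    rw [injective_iff_map_eq_zero]
    intro z hz
    by_contra h
    exact hpos z h (DFunLike.congr_fun hz z)
  have h_rank : finrank ℝ V = finrank ℝ (V →L[ℝ] ℝ) := by
    rw [← (LinearMap.toContinuousLinearMap (𝕜 := ℝ) (E := V) (F' := ℝ)).finrank_eq]
    exact (Subspace.dual_finrank_eq (K := ℝ) (V := V)).symm
  exact ⟨(LinearEquiv.ofInjectiveOfFinrankEq _ h_inj h_rank).toContinuousLinearEquiv, rfl⟩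

theorem form_riesz (hpos : ∀ z, z ≠ 0 → B (Φ z) (Φ z) ≠ 0) (l : V →L[ℝ] ℝ) (w : V) :
    B (Φ (riesz B Φ l)) (Φ w) = l w := by
  have h := (isInvertible_gram hpos).self_comp_inverse
  exact DFunLike.congr_fun (DFunLike.congr_fun h l) w

theorem orthCoord_apply_self (hpos : ∀ z, z ≠ 0 → B (Φ z) (Φ z) ≠ 0) (z : V) :
    orthCoord B Φ (Φ z) = z :=
  DFunLike.congr_fun (isInvertible_gram hpos).inverse_comp_self z

theorem form_orthCoord (hpos : ∀ z, z ≠ 0 → B (Φ z) (Φ z) ≠ 0) (f : F) (w : V) :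
    B (Φ (orthCoord B Φ f)) (Φ w) = B f (Φ w) :=
  form_riesz hpos (restrictForm B Φ f) w

theorem contDiffAt_riesz {Φ : Y → V →L[ℝ] F} {y : Y} {n : WithTop ℕ∞}
    (hΦ : ContDiffAt ℝ n Φ y) (hpos : ∀ z, z ≠ 0 → B (Φ y z) (Φ y z) ≠ 0) :
    ContDiffAt ℝ n (fun y => riesz B (Φ y)) y :=
  (isInvertible_gram hpos).contDiffAt_map_inverse.comp y
    ((contDiffAt_restrictForm hΦ).clm_comp hΦ)

theorem contDiffAt_orthCoord {Φ : Y → V →L[ℝ] F} {y : Y} {n : WithTop ℕ∞}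
    (hΦ : ContDiffAt ℝ n Φ y) (hpos : ∀ z, z ≠ 0 → B (Φ y z) (Φ y z) ≠ 0) :
    ContDiffAt ℝ n (fun y => orthCoord B (Φ y)) y :=
  (contDiffAt_riesz hΦ hpos).clm_comp (contDiffAt_restrictForm hΦ)

end GramOperator

/-! ### The spray of an immersion and parallel normal frames -/

section AdaptedFrame

variable {V F M : Type*} [NormedAddCommGroup V] [NormedSpace ℝ V]
  [NormedAddCommGroup F] [NormedSpace ℝ F] [NormedAddCommGroup M] [NormedSpace ℝ M]

/-- The acceleration in coordinates of the geodesics of an immersion `φ`: the second derivative of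
`φ` along a curve `x` with `x'' = geodesicAccel B φ (x, x')` is normal. -/
def geodesicAccel (B : F →L[ℝ] F →L[ℝ] ℝ) (φ : V → F) (z : V × V) : V :=
  -orthCoord B (fderiv ℝ φ z.1) (fderiv ℝ (fderiv ℝ φ) z.1 z.2 z.2)

/-- `φ` is a nondegenerate parametrization over `U`, and `X` is a frame of a normal subbundle which
is parallel up to the frame itself. The frame is normalized by the constant functional `L`, so that
its differential vanishes exactly on the generalized nullity. -/
structure IsAdaptedFrame (B : F →L[ℝ] F →L[ℝ] ℝ) (U : Set V) (φ : V → F) (X : V → M →L[ℝ] F)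
    (L : F →L[ℝ] M) : Prop where
  isOpen : IsOpen U
  contDiffOn : ContDiffOn ℝ ∞ φ U
  contDiffOn_frame : ContDiffOn ℝ ∞ X U
  symm : ∀ x y, B x y = B y x
  orthogonal : ∀ x ∈ U, ∀ a w, B (X x a) (fderiv ℝ φ x w) = 0
  parallel : ∀ x ∈ U, ∀ u a, ∃ z a', fderiv ℝ X x u a = fderiv ℝ φ x z + X x a'
  normalized : ∀ x ∈ U, ∀ a, L (X x a) = a
  anisotropic : ∀ x ∈ U, ∀ z, z ≠ 0 → B (fderiv ℝ φ x z) (fderiv ℝ φ x z) ≠ 0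

namespace IsAdaptedFrame

variable {B : F →L[ℝ] F →L[ℝ] ℝ} {U : Set V} {φ : V → F} {X : V → M →L[ℝ] F} {L : F →L[ℝ] M}
  (C : IsAdaptedFrame B U φ X L) {x : V} (hx : x ∈ U)
include C hx

theorem contDiffAt_fderiv : ContDiffAt ℝ ∞ (fderiv ℝ φ) x :=
  (C.contDiffOn.contDiffAt (C.isOpen.mem_nhds hx)).fderiv_right (m := ∞) (by simp)

theorem contDiffAt_fderiv_frame : ContDiffAt ℝ ∞ (fderiv ℝ X) x :=
  (C.contDiffOn_frame.contDiffAt (C.isOpen.mem_nhds hx)).fderiv_right (m := ∞) (by simp)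

theorem hasFDerivAt_frame : HasFDerivAt X (fderiv ℝ X x) x :=
  ((C.contDiffOn_frame.contDiffAt (C.isOpen.mem_nhds hx)).differentiableAt
    (by simp)).hasFDerivAt

theorem hasFDerivAt_fderiv : HasFDerivAt (fderiv ℝ φ) (fderiv ℝ (fderiv ℝ φ) x) x :=
  ((C.contDiffAt_fderiv hx).differentiableAt (by simp)).hasFDerivAt

theorem hasFDerivAt_fderiv_frame : HasFDerivAt (fderiv ℝ X) (fderiv ℝ (fderiv ℝ X) x) x :=
  ((C.contDiffAt_fderiv_frame hx).differentiableAt (by simp)).hasFDerivAt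

theorem fderiv_fderiv_symm (u w : V) :
    fderiv ℝ (fderiv ℝ φ) x u w = fderiv ℝ (fderiv ℝ φ) x w u :=
  (C.contDiffOn.contDiffAt (C.isOpen.mem_nhds hx)).isSymmSndFDerivAt
    (by simp [minSmoothness_of_isRCLikeNormedField, ENat.LEInfty.out]) u w

theorem fderiv_fderiv_frame_symm (u w : V) :
    fderiv ℝ (fderiv ℝ X) x u w = fderiv ℝ (fderiv ℝ X) x w u :=
  (C.contDiffOn_frame.contDiffAt (C.isOpen.mem_nhds hx)).isSymmSndFDerivAt
    (by simp [minSmoothness_of_isRCLikeNormedField, ENat.LEInfty.out]) u w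

theorem form_fderiv_frame_add (a : M) (u w : V) :
    B (fderiv ℝ X x u a) (fderiv ℝ φ x w) + B (X x a) (fderiv ℝ (fderiv ℝ φ) x u w) = 0 := by
  have h_deriv := (B.hasFDerivAt.comp x
    ((C.hasFDerivAt_frame hx).clm_apply (hasFDerivAt_const a x))).clm_apply
    ((C.hasFDerivAt_fderiv hx).clm_apply (hasFDerivAt_const w x))
  have h_zero : HasFDerivAt (fun y => B (X y a) (fderiv ℝ φ y w)) (0 : V →L[ℝ] ℝ) x :=
    (hasFDerivAt_const (0 : ℝ) x).congr_of_eventuallyEq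
      (eventually_of_mem (C.isOpen.mem_nhds hx) fun y hy => C.orthogonal y hy a w)
  have h_eq := DFunLike.congr_fun (h_deriv.unique h_zero) u
  simpa [add_comm] using h_eq

theorem form_fderiv_frame_symm (a : M) (u w : V) :
    B (fderiv ℝ X x u a) (fderiv ℝ φ x w) = B (fderiv ℝ X x w a) (fderiv ℝ φ x u) := by
  have h_uw := C.form_fderiv_frame_add hx a u w
  have h_wu := C.form_fderiv_frame_add hx a w u
  rw [C.fderiv_fderiv_symm hx] at h_uw
  linarith

theorem normalized_fderiv_frame (u : V) (a : M) : L (fderiv ℝ X x u a) = 0 := by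
  have h_deriv := L.hasFDerivAt.comp x
    ((C.hasFDerivAt_frame hx).clm_apply (hasFDerivAt_const a x))
  have h_const : HasFDerivAt (fun y => L (X y a)) (0 : V →L[ℝ] M) x :=
    (hasFDerivAt_const a x).congr_of_eventuallyEq
      (eventually_of_mem (C.isOpen.mem_nhds hx) fun y hy => C.normalized y hy a)
  simpa using DFunLike.congr_fun (h_deriv.unique h_const) u

theorem fderiv_frame_eq_zero_iff {u : V} :
    fderiv ℝ X x u = 0 ↔ ∀ a w, B (fderiv ℝ X x u a) (fderiv ℝ φ x w) = 0 := by
  refine ⟨fun h a w => by simp [h], fun h => ContinuousLinearMap.ext fun a => ?_⟩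
  obtain ⟨z, a', h_eq⟩ := C.parallel x hx u a
  have hz : z = 0 := by
    by_contra hz
    refine C.anisotropic x hx z hz ?_
    simpa [h_eq, C.orthogonal x hx] using h a z
  have ha' := C.normalized_fderiv_frame hx u a
  rw [h_eq, hz, map_zero, zero_add, C.normalized x hx] at ha'
  simp [h_eq, hz, ha']

/-- Differentiate the symmetry of the second fundamental form in the direction `u`. -/
theorem form_fderiv_fderiv_frame {u : V} (hu : fderiv ℝ X x u = 0) (a : M) (w : V) :
    B (fderiv ℝ (fderiv ℝ X) x u u a) (fderiv ℝ φ x w) =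
      B (fderiv ℝ (fderiv ℝ X) x u w a) (fderiv ℝ φ x u) +
        B (fderiv ℝ X x w a) (fderiv ℝ (fderiv ℝ φ) x u u) := by
  have h_side (v w : V) := (B.hasFDerivAt.comp x
    (((C.hasFDerivAt_fderiv_frame hx).clm_apply (hasFDerivAt_const v x)).clm_apply
      (hasFDerivAt_const a x))).clm_apply
    ((C.hasFDerivAt_fderiv hx).clm_apply (hasFDerivAt_const w x))
  have h_eq := DFunLike.congr_fun ((h_side u w).unique ((h_side w u).congr_of_eventuallyEq
    (eventually_of_mem (C.isOpen.mem_nhds hx) fun y hy => C.form_fderiv_frame_symm hy a u w))) u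
  simp only [Function.comp_apply, hu] at h_eq
  simpa [add_comm] using h_eq

variable [FiniteDimensional ℝ V]

theorem form_geodesicAccel (u w : V) :
    B (fderiv ℝ (fderiv ℝ φ) x u u + fderiv ℝ φ x (geodesicAccel B φ (x, u)))
      (fderiv ℝ φ x w) = 0 := by
  simp [geodesicAccel, form_orthCoord (C.anisotropic x hx)]

/-- The acceleration along the geodesic is normal to `φ`. Differentiating `B (X a) (φ' u) = 0` along
`u` shows that it is also orthogonal to the frame. -/
theorem form_fderiv_frame_accel {u : V} (hu : fderiv ℝ X x u = 0) (a : M) (w : V) :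
    B (fderiv ℝ X x w a)
      (fderiv ℝ (fderiv ℝ φ) x u u + fderiv ℝ φ x (geodesicAccel B φ (x, u))) = 0 := by
  obtain ⟨z, a', h_eq⟩ := C.parallel x hx w a
  have h_frame := C.form_fderiv_frame_add hx a' u u
  rw [hu, _root_.zero_apply, map_zero, _root_.zero_apply, zero_add] at h_frame
  rw [h_eq, map_add (B : F →L[ℝ] F →L[ℝ] ℝ), _root_.add_apply, C.symm (fderiv ℝ φ x z),
    C.form_geodesicAccel hx, map_add, h_frame, C.orthogonal x hx, add_zero, add_zero]

variable [FiniteDimensional ℝ F] [FiniteDimensional ℝ M]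

/-- Where the nullity has locally minimal dimension, `D²X u u` lies in the range of `DX`, so its
vanishing can be tested against tangent vectors. -/
theorem fderiv_fderiv_frame_add_eq_zero (hmin : IsLocalMin (kerDim X) x) {u : V}
    (hu : fderiv ℝ X x u = 0) :
    fderiv ℝ (fderiv ℝ X) x u u + fderiv ℝ X x (geodesicAccel B φ (x, u)) = 0 := by
  have h_range := fderiv_apply_mem_range
    ((C.contDiffAt_fderiv_frame hx).of_le (by simp)) hmin hu
  have h_cross (a : M) (w : V) :
      B (fderiv ℝ (fderiv ℝ X) x u w a) (fderiv ℝ φ x u) = 0 := by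
    obtain ⟨z, hz⟩ := h_range w
    rw [C.fderiv_fderiv_frame_symm hx, ← hz]
    simpa [hu] using C.form_fderiv_frame_symm hx a z u
  obtain ⟨z, hz⟩ := h_range u
  have h_sum : fderiv ℝ (fderiv ℝ X) x u u + fderiv ℝ X x (geodesicAccel B φ (x, u)) =
      fderiv ℝ X x (z + geodesicAccel B φ (x, u)) := by
    rw [map_add, ← hz]
    rfl
  rw [h_sum, C.fderiv_frame_eq_zero_iff hx]
  intro a w
  calc _ = B (fderiv ℝ (fderiv ℝ X) x u u a) (fderiv ℝ φ x w) +
        B (fderiv ℝ X x (geodesicAccel B φ (x, u)) a) (fderiv ℝ φ x w) := by simp [← h_sum]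
    _ = B (fderiv ℝ X x w a)
          (fderiv ℝ (fderiv ℝ φ) x u u + fderiv ℝ φ x (geodesicAccel B φ (x, u))) := by
      rw [C.form_fderiv_fderiv_frame hx hu, h_cross, zero_add,
        C.form_fderiv_frame_symm hx a _ w, map_add]
    _ = 0 := C.form_fderiv_frame_accel hx hu a w

omit hx in
theorem isKernelSpray : IsKernelSpray X (geodesicAccel B φ) U where
  isOpen := C.isOpen
  contDiffOn := C.contDiffOn_frame
  contDiffOn_spray := by
    intro z hz
    have hφ : ContDiffAt ℝ ∞ (fun z : V × V => fderiv ℝ φ z.1) z :=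
      (C.contDiffAt_fderiv hz.1).comp z contDiffAt_fst
    have hφ₂ : ContDiffAt ℝ ∞ (fun z : V × V => fderiv ℝ (fderiv ℝ φ) z.1) z :=
      ((C.contDiffAt_fderiv hz.1).fderiv_right (m := ∞) (by simp)).comp z contDiffAt_fst
    exact ((contDiffAt_orthCoord hφ (C.anisotropic z.1 hz.1)).clm_apply
      ((hφ₂.clm_apply contDiffAt_snd).clm_apply contDiffAt_snd)).neg.contDiffWithinAt
  second_deriv_eq_zero _ hx hmin _ hu := C.fderiv_fderiv_frame_add_eq_zero hx hmin hu

end IsAdaptedFrame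

end AdaptedFrame

/-! ### Space forms -/

theorem exists_contDiff_forall_of_eventually {P : ℝ → Prop} (hP : ∀ᶠ s in 𝓝 0, P s) :
    ∃ σ : ℝ → ℝ, ContDiff ℝ ∞ σ ∧ σ 0 = 0 ∧ HasDerivAt σ 1 0 ∧ ∀ t, P (σ t) := by
  obtain ⟨ε, hε, h_ball⟩ := Metric.eventually_nhds_iff.1 hP
  refine ⟨fun t => ε / 2 * Real.sin (t / (ε / 2)), by fun_prop, by simp, ?_, fun t => h_ball ?_⟩
  · have h_arg : HasDerivAt (fun t : ℝ => t / (ε / 2)) (1 / (ε / 2)) 0 :=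
      (hasDerivAt_id 0).div_const _
    have h_sin := (h_arg.sin).const_mul (ε / 2)
    simpa [hε.ne'] using h_sin
  · rw [dist_zero_right, norm_mul, Real.norm_of_nonneg (by positivity)]
    calc ε / 2 * ‖Real.sin (t / (ε / 2))‖ ≤ ε / 2 * 1 := by
          gcongr
          exact Real.abs_sin_le_one _
      _ < ε := by linarith

/-- The ambient bilinear form `aForm` as a continuous bilinear map. -/
def ambientForm (k : SpaceFormKind) (D : ℕ) : 𝔼 D →L[ℝ] 𝔼 D →L[ℝ] ℝ :=
  ∑ i, formSign k D i • (EuclideanSpace.proj i : 𝔼 D →L[ℝ] ℝ).smulRight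
    (EuclideanSpace.proj i : 𝔼 D →L[ℝ] ℝ)

/-- The constant sectional curvature of the model space form. -/
def curvature : SpaceFormKind → ℝ
  | .euclidean => 0
  | .sphere => 1
  | .hyperbolic => -1

section SpaceForm

variable {k : SpaceFormKind} {D : ℕ}

theorem ambientForm_apply (x y : 𝔼 D) : ambientForm k D x y = aForm k x y := by
  simp [ambientForm, aForm, mul_assoc]

theorem ambientForm_comm (x y : 𝔼 D) : ambientForm k D x y = ambientForm k D y x := by
  simp only [ambientForm_apply, aForm]
  exact Finset.sum_congr rfl fun i _ => by ring

theorem curvature_pow_three : curvature k ^ 3 = curvature k := by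
  cases k <;> norm_num [curvature]

theorem curvature_mul_ambientForm_self {p : 𝔼 D} (hp : p ∈ spaceForm k D) :
    curvature k * ambientForm k D p p = curvature k ^ 2 := by
  rw [ambientForm_apply]
  cases k with
  | euclidean => simp [curvature]
  | sphere => rw [show aForm .sphere p p = 1 from hp, curvature, mul_one, one_pow]
  | hyperbolic => rw [hp.1, sq, curvature]

theorem aForm_self_of_ne_hyperbolic (hk : k ≠ .hyperbolic) (v : 𝔼 D) : aForm k v v = ‖v‖ ^ 2 := by
  rw [EuclideanSpace.norm_sq_eq]
  cases k <;> simp_all [aForm, formSign, sq]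

theorem aForm_hyperbolic {d : ℕ} (x y : EuclideanSpace ℝ (Fin (d + 1))) :
    aForm .hyperbolic x y =
      (∑ i : Fin d, x i.castSucc * y i.castSucc) - x (Fin.last d) * y (Fin.last d) := by
  have h_space (i : Fin d) : formSign .hyperbolic (d + 1) i.castSucc = 1 := by
    simp [formSign, i.isLt.ne]
  have h_time : formSign .hyperbolic (d + 1) (Fin.last d) = -1 := by simp [formSign]
  simp only [aForm, Fin.sum_univ_castSucc, h_space, h_time, one_mul, neg_mul, sub_eq_add_neg]

/-- Reverse Cauchy–Schwarz. -/
theorem aForm_hyperbolic_self_pos {p v : 𝔼 D} (hp : aForm .hyperbolic p p = -1)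
    (hvp : aForm .hyperbolic v p = 0) (hv : v ≠ 0) : 0 < aForm .hyperbolic v v := by
  obtain _ | d := D
  · simp [aForm] at hp
  have h_norm : ‖v‖ ^ 2 = (∑ i : Fin d, v i.castSucc * v i.castSucc) +
      v (Fin.last d) * v (Fin.last d) := by
    simp [EuclideanSpace.norm_sq_eq, Fin.sum_univ_castSucc, ← sq]
  have h_cauchy := Finset.sum_mul_sq_le_sq_mul_sq Finset.univ (fun i : Fin d => v i.castSucc)
    (fun i : Fin d => p i.castSucc)
  simp only [aForm_hyperbolic, sq] at hp hvp h_cauchy ⊢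
  set a := ∑ i : Fin d, v i.castSucc * v i.castSucc
  set vₗ := v (Fin.last d)
  set pₗ := p (Fin.last d)
  have ha : 0 ≤ a := Finset.sum_nonneg fun i _ => mul_self_nonneg _
  have hpₗ : 1 ≤ pₗ * pₗ := by
    have : 0 ≤ ∑ i : Fin d, p i.castSucc * p i.castSucc :=
      Finset.sum_nonneg fun i _ => mul_self_nonneg _
    linarith
  rw [sub_eq_zero.1 hvp, eq_add_of_sub_eq hp] at h_cauchy
  have hv_norm : 0 < ‖v‖ ^ 2 := by positivity
  by_contra! h_neg
  have h_mul := mul_le_mul_of_nonneg_right (sub_nonpos.1 h_neg) (mul_self_nonneg pₗ)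
  have : a = 0 := by linarith
  nlinarith [mul_self_nonneg vₗ]

theorem ambientForm_self_pos {p v : 𝔼 D} (hp : p ∈ spaceForm k D)
    (hvp : curvature k * ambientForm k D v p = 0) (hv : v ≠ 0) : 0 < ambientForm k D v v := by
  rw [ambientForm_apply] at hvp ⊢
  by_cases hk : k = .hyperbolic
  · subst hk
    exact aForm_hyperbolic_self_pos hp.1 (by simpa [curvature] using hvp) hv
  · rw [aForm_self_of_ne_hyperbolic hk]
    positivity

theorem curvature_mul_ambientForm_of_mem_tangentAt {p v : 𝔼 D}
    (hv : v ∈ TangentAt (spaceForm k D) p) : curvature k * ambientForm k D v p = 0 := by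
  suffices h : TangentAt (spaceForm k D) p ≤
      LinearMap.ker (curvature k • ((ambientForm k D).flip p : 𝔼 D →ₗ[ℝ] ℝ)) from h hv
  refine Submodule.span_le.2 ?_
  rintro v ⟨c, hc, hc_mem, rfl, rfl⟩
  have hc' : HasDerivAt c (deriv c 0) 0 := (hc.differentiable (by simp) 0).hasDerivAt
  have h_form := (((ambientForm k D).hasFDerivAt.comp_hasDerivAt (0 : ℝ) hc').clm_apply
    hc').const_mul (curvature k)
  have h_const : HasDerivAt (fun t => curvature k * ambientForm k D (c t) (c t)) 0 0 :=
    (hasDerivAt_const _ (curvature k ^ 2)).congr_of_eventuallyEq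
      (Eventually.of_forall fun t => curvature_mul_ambientForm_self (hc_mem t))
  have h_eq := h_form.unique h_const
  simp only [Function.comp_apply, ambientForm_comm (c 0)] at h_eq
  change curvature k * ambientForm k D (deriv c 0) (c 0) = 0
  linarith

theorem inv_smul_mem_spaceForm {w : 𝔼 D} {r : ℝ} (hr : 0 < r)
    (hw : curvature k * ambientForm k D w w = curvature k ^ 2 * r ^ 2)
    (hpos : k = .hyperbolic → ∀ i : Fin D, (i : ℕ) + 1 = D → 0 < w i) :
    r⁻¹ • w ∈ spaceForm k D := by
  have h_smul : aForm k (r⁻¹ • w) (r⁻¹ • w) = r⁻¹ * (r⁻¹ * ambientForm k D w w) := by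
    simp [← ambientForm_apply]
  cases k with
  | euclidean => trivial
  | sphere =>
    change aForm .sphere (r⁻¹ • w) (r⁻¹ • w) = 1
    rw [h_smul, show ambientForm .sphere D w w = r ^ 2 by simpa [curvature] using hw]
    field_simp
  | hyperbolic =>
    refine ⟨?_, fun i hi => mul_pos (inv_pos.2 hr) (hpos rfl i hi)⟩
    rw [h_smul, show ambientForm .hyperbolic D w w = -r ^ 2 by
      simpa [curvature, neg_eq_iff_eq_neg] using hw]
    field_simp

/-- Project the line through `p` with direction `v` radially to the space form. -/
theorem mem_tangentAt_spaceForm {p v : 𝔼 D} (hp : p ∈ spaceForm k D)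
    (hv : curvature k * ambientForm k D v p = 0) : v ∈ TangentAt (spaceForm k D) p := by
  let q : ℝ → ℝ := fun s => 1 + curvature k * ambientForm k D v v * s ^ 2
  have h_near : ∀ᶠ s : ℝ in 𝓝 0, 0 < q s ∧
      (k = .hyperbolic → ∀ i : Fin D, (i : ℕ) + 1 = D → 0 < (p + s • v) i) := by
    have hq : ContinuousAt q 0 := by fun_prop
    refine (hq.eventually_const_lt (by simp [q])).and ?_
    by_cases hk : k = .hyperbolic
    · subst hk
      simp only [forall_const, eventually_all]
      intro i hi
      have h_coord : ContinuousAt (fun s : ℝ => (p + s • v) i) 0 := by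
        simp only [PiLp.add_apply, PiLp.smul_apply]
        fun_prop
      exact h_coord.eventually_const_lt (by simpa using hp.2 i hi)
    · simp [hk]
  obtain ⟨σ, hσ, hσ₀, hσ', h_σ⟩ := exists_contDiff_forall_of_eventually h_near
  have h_sqrt (t : ℝ) : ContDiffAt ℝ ∞ (fun t => (√(q (σ t)))⁻¹) t :=
    (((by fun_prop : ContDiffAt ℝ ∞ (fun t => q (σ t)) t).sqrt (h_σ t).1.ne').inv
      (Real.sqrt_pos.2 (h_σ t).1).ne')
  have hq' : HasDerivAt (fun t => (√(q (σ t)))⁻¹) 0 0 := by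
    have h_pow := (hσ'.pow 2).const_mul (curvature k * ambientForm k D v v) |>.const_add 1
    have hq₀ : q (σ 0) ≠ 0 := (h_σ 0).1.ne'
    exact ((h_pow.sqrt hq₀).fun_inv (Real.sqrt_pos.2 (h_σ 0).1).ne').congr_deriv (by simp [hσ₀])
  have h_deriv := hq'.fun_smul ((hσ'.smul_const v).const_add p)
  refine Submodule.subset_span ⟨fun t => (√(q (σ t)))⁻¹ • (p + σ t • v),
    contDiff_iff_contDiffAt.2 fun t => (h_sqrt t).smul (by fun_prop), fun t => ?_,
    by simp [hσ₀, q], h_deriv.deriv.trans (by simp [hσ₀, q])⟩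
  refine inv_smul_mem_spaceForm (Real.sqrt_pos.2 (h_σ t).1) ?_ (h_σ t).2
  have hpp := curvature_mul_ambientForm_self hp
  rw [Real.sq_sqrt (h_σ t).1.le]
  simp only [map_add, map_smul, _root_.add_apply, _root_.smul_apply, smul_eq_mul, q,
    ambientForm_comm p v]
  linear_combination hpp + 2 * σ t * hv -
    ambientForm k D v v * σ t ^ 2 * curvature_pow_three (k := k)

end SpaceForm

/-! ### Charts of submanifolds -/

section LeftInverse

variable {V F : Type*} [NormedAddCommGroup V] [NormedSpace ℝ V] [NormedAddCommGroup F]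
  [NormedSpace ℝ F]

theorem eventually_isInvertible_leftInverse_comp [CompleteSpace V] {Y : Type*} [TopologicalSpace Y]
    {Φ : Y → V →L[ℝ] F} {y : Y} (hΦ : ContinuousAt Φ y) (h : (Φ y).HasLeftInverse) :
    ∀ᶠ y' in 𝓝 y, (h.leftInverse ∘L Φ y').IsInvertible := by
  have h_cont : ContinuousAt (fun y' => h.leftInverse ∘L Φ y') y := continuousAt_const.clm_comp hΦ
  have h_id : h.leftInverse ∘L Φ y = ContinuousLinearEquiv.refl ℝ V :=
    ContinuousLinearMap.ext h.leftInverse_leftInverse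
  exact h_cont.eventually_mem (h_id ▸ ContinuousLinearEquiv.nhds _)

variable [FiniteDimensional ℝ V] [FiniteDimensional ℝ F]

theorem exists_contDiffOn_leftInverse {φ : V → F} {U : Set V} (hU : IsOpen U)
    (hφ : ContDiffOn ℝ ∞ φ U) {x₀ : V} (hx₀ : x₀ ∈ U)
    (h_inj : Function.Injective (fderiv ℝ φ x₀)) :
    ∃ U₁ ⊆ U, IsOpen U₁ ∧ x₀ ∈ U₁ ∧ ∃ (ρ : F → V) (N : Set F),
      IsOpen N ∧ ContDiffOn ℝ ∞ ρ N ∧ MapsTo φ U₁ N ∧ LeftInvOn ρ φ U₁ := by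
  have h_smooth {x : V} (hx : x ∈ U) : ContDiffAt ℝ ∞ φ x := hφ.contDiffAt (hU.mem_nhds hx)
  have h_left := ContinuousLinearMap.HasLeftInverse.of_injective_of_finiteDimensional h_inj
  let Λ : F →L[ℝ] V := h_left.leftInverse
  let g : V → V := Λ ∘ φ
  have hg {x : V} (hx : x ∈ U) : ContDiffAt ℝ ∞ g x := Λ.contDiff.contDiffAt.comp x (h_smooth hx)
  have hg' {x : V} (hx : x ∈ U) : HasFDerivAt g (Λ ∘L fderiv ℝ φ x) x :=
    Λ.hasFDerivAt.comp x ((h_smooth hx).differentiableAt (by simp)).hasFDerivAt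
  have hg₀ := hg' hx₀
  rw [show Λ ∘L fderiv ℝ φ x₀ = ContinuousLinearEquiv.refl ℝ V from
    ContinuousLinearMap.ext h_left.leftInverse_leftInverse] at hg₀
  let e := (hg hx₀).toOpenPartialHomeomorph g hg₀ (by simp)
  have h_equiv := eventually_isInvertible_leftInverse_comp
    ((h_smooth hx₀).fderiv_right (m := ∞) (by simp)).continuousAt h_left
  obtain ⟨U₁, hU₁, h_open, hx₀U₁⟩ := eventually_nhds_iff.1 (((hU.eventually_mem hx₀).and
    (e.open_source.eventually_mem
      ((hg hx₀).mem_toOpenPartialHomeomorph_source hg₀ (by simp)))).and h_equiv)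
  refine ⟨U₁, fun x hx => (hU₁ x hx).1.1, h_open, hx₀U₁, e.symm ∘ Λ, Λ ⁻¹' (e '' U₁),
    (e.isOpen_image_of_subset_source h_open fun x hx => (hU₁ x hx).1.2).preimage Λ.continuous,
    ?_, fun x hx => ⟨x, hx, rfl⟩, fun x hx => e.left_inv (hU₁ x hx).1.2⟩
  rintro y ⟨x, hx, hxy⟩
  obtain ⟨⟨hxU, hx_source⟩, f, hf⟩ := hU₁ x hx
  have h_symm : ContDiffAt ℝ ∞ e.symm (e x) := by
    refine e.contDiffAt_symm (f₀' := f) (e.map_source hx_source) ?_ ?_ <;>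
      rw [e.left_inv hx_source]
    exacts [hf ▸ hg' hxU, hg hxU]
  rw [hxy] at h_symm
  exact (h_symm.comp y Λ.contDiff.contDiffAt).contDiffWithinAt

end LeftInverse

theorem eventually_add_smul_mem {V : Type*} [NormedAddCommGroup V] [NormedSpace ℝ V] {U : Set V}
    (hU : IsOpen U) {x : V} (hx : x ∈ U) (w : V) : ∀ᶠ s : ℝ in 𝓝 0, x + s • w ∈ U := by
  have h_cont : ContinuousAt (fun s : ℝ => x + s • w) 0 := by fun_prop
  exact h_cont.eventually_mem (hU.mem_nhds (by simpa using hx))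

theorem exists_contDiff_curve_mem {V : Type*} [NormedAddCommGroup V] [NormedSpace ℝ V] {U : Set V}
    (hU : IsOpen U) {x₀ : V} (hx₀ : x₀ ∈ U) (u : V) :
    ∃ x : ℝ → V, ContDiff ℝ ∞ x ∧ x 0 = x₀ ∧ HasDerivAt x u 0 ∧ ∀ t, x t ∈ U := by
  obtain ⟨σ, hσ, hσ₀, hσ', hσU⟩ :=
    exists_contDiff_forall_of_eventually (eventually_add_smul_mem hU hx₀ u)
  exact ⟨fun t => x₀ + σ t • u, by fun_prop, by simp [hσ₀],
    by simpa using (hσ'.smul_const u).const_add x₀, hσU⟩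

/-- `φ : U → S` is a smooth parametrization of the part of `S` in the open set `N`, whose inverse
is the restriction of a map `ρ` that is smooth on all of `N`. -/
structure IsSmoothChart {n D : ℕ} (S : Set (𝔼 D)) (φ : 𝔼 n → 𝔼 D) (U : Set (𝔼 n))
    (ρ : 𝔼 D → 𝔼 n) (N : Set (𝔼 D)) : Prop where
  isOpen : IsOpen U
  contDiffOn : ContDiffOn ℝ ∞ φ U
  isOpen_codomain : IsOpen N
  contDiffOn_inv : ContDiffOn ℝ ∞ ρ N
  mapsTo : MapsTo φ U (S ∩ N)
  mapsTo_inv : MapsTo ρ (S ∩ N) U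
  leftInvOn : LeftInvOn ρ φ U
  rightInvOn : RightInvOn ρ φ (S ∩ N)

theorem exists_isSmoothChart {n D : ℕ} {S : Set (𝔼 D)} (hS : IsSubmanifold S n) {p : 𝔼 D}
    (hp : p ∈ S) : ∃ (φ : 𝔼 n → 𝔼 D) (U : Set (𝔼 n)) (ρ : 𝔼 D → 𝔼 n) (N : Set (𝔼 D)),
      IsSmoothChart S φ U ρ N ∧ p ∈ N := by
  obtain ⟨φ, U, h⟩ := hS p hp
  obtain ⟨x₀, hx₀, rfl⟩ := h.mem
  obtain ⟨V, hV, h_image⟩ := h.openImage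
  obtain ⟨ψ, hψ, hψφ⟩ := h.embedding
  have h_inj : Function.Injective (fderiv ℝ φ x₀) :=
    fderivWithin_of_isOpen (𝕜 := ℝ) (f := φ) h.isOpen hx₀ ▸ h.immersion x₀ hx₀
  obtain ⟨U₁, hU₁, hU₁_open, hx₀U₁, ρ, N, hN, hρ, hφN, hρφ⟩ :=
    exists_contDiffOn_leftInverse h.isOpen h.smooth hx₀ h_inj
  have hSV {x : 𝔼 n} (hx : x ∈ U) : φ x ∈ S ∩ V := h_image ▸ mem_image_of_mem φ hx
  obtain ⟨N', hN', hpN', h_near⟩ := mem_nhdsWithin.1 ((hψ (φ x₀) (mem_image_of_mem φ hx₀)) <|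
    (hψφ x₀ hx₀).symm ▸ hU₁_open.mem_nhds hx₀U₁)
  have h_solve {y : 𝔼 D} (hyS : y ∈ S) (hyV : y ∈ V) (hyN' : y ∈ N') : ∃ x ∈ U₁, φ x = y := by
    obtain ⟨x, hx, rfl⟩ : y ∈ φ '' U := h_image ▸ ⟨hyS, hyV⟩
    exact ⟨x, hψφ x hx ▸ h_near ⟨hyN', mem_image_of_mem φ hx⟩, rfl⟩
  refine ⟨φ, U₁ ∩ φ ⁻¹' N', ρ, V ∩ N' ∩ N, ⟨?_, h.smooth.mono (inter_subset_left.trans hU₁),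
    (hV.inter hN').inter hN, hρ.mono inter_subset_right, fun x hx => ?_, ?_,
    hρφ.mono inter_subset_left, ?_⟩, ⟨(hSV hx₀).2, hpN'⟩, hφN hx₀U₁⟩
  · exact (h.smooth.continuousOn.mono hU₁).isOpen_inter_preimage hU₁_open hN'
  · exact ⟨(hSV (hU₁ hx.1)).1, ⟨(hSV (hU₁ hx.1)).2, hx.2⟩, hφN hx.1⟩
  · rintro y ⟨hyS, ⟨hyV, hyN'⟩, -⟩
    obtain ⟨x, hx, rfl⟩ := h_solve hyS hyV hyN'
    exact ⟨(hρφ hx).symm ▸ hx, by simpa only [mem_preimage, hρφ hx] using hyN'⟩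
  · rintro y ⟨hyS, ⟨hyV, hyN'⟩, -⟩
    obtain ⟨x, hx, rfl⟩ := h_solve hyS hyV hyN'
    exact congrArg φ (hρφ hx)

namespace IsSmoothChart

variable {n D : ℕ} {S : Set (𝔼 D)} {φ : 𝔼 n → 𝔼 D} {U : Set (𝔼 n)} {ρ : 𝔼 D → 𝔼 n}
  {N : Set (𝔼 D)} (hφ : IsSmoothChart S φ U ρ N)

include hφ

theorem inter {N₁ : Set (𝔼 D)} (hN₁ : IsOpen N₁) :
    IsSmoothChart S φ (U ∩ φ ⁻¹' N₁) ρ (N ∩ N₁) where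
  isOpen := hφ.contDiffOn.continuousOn.isOpen_inter_preimage hφ.isOpen hN₁
  contDiffOn := hφ.contDiffOn.mono inter_subset_left
  isOpen_codomain := hφ.isOpen_codomain.inter hN₁
  contDiffOn_inv := hφ.contDiffOn_inv.mono inter_subset_left
  mapsTo x hx := ⟨(hφ.mapsTo hx.1).1, (hφ.mapsTo hx.1).2, hx.2⟩
  mapsTo_inv y hy := ⟨hφ.mapsTo_inv ⟨hy.1, hy.2.1⟩, by
    simpa only [mem_preimage, hφ.rightInvOn ⟨hy.1, hy.2.1⟩] using hy.2.2⟩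
  leftInvOn := hφ.leftInvOn.mono inter_subset_left
  rightInvOn := hφ.rightInvOn.mono fun _ hy => ⟨hy.1, hy.2.1⟩

theorem hasFDerivAt {x : 𝔼 n} (hx : x ∈ U) : HasFDerivAt φ (fderiv ℝ φ x) x :=
  ((hφ.contDiffOn.contDiffAt (hφ.isOpen.mem_nhds hx)).differentiableAt (by simp)).hasFDerivAt

theorem contDiffAt_fderiv {x : 𝔼 n} (hx : x ∈ U) : ContDiffAt ℝ ∞ (fderiv ℝ φ) x :=
  (hφ.contDiffOn.contDiffAt (hφ.isOpen.mem_nhds hx)).fderiv_right (m := ∞) (by simp)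

theorem hasDerivAt_fderiv_apply {x : ℝ → 𝔼 n} {t : ℝ} {u : 𝔼 n} (hx : x t ∈ U)
    (hxt : HasDerivAt x u t) (w : 𝔼 n) :
    HasDerivAt (fun s => fderiv ℝ φ (x s) w) (fderiv ℝ (fderiv ℝ φ) (x t) u w) t := by
  have h_deriv : HasDerivAt (fun s => fderiv ℝ φ (x s)) (fderiv ℝ (fderiv ℝ φ) (x t) u) t :=
    ((hφ.contDiffAt_fderiv hx).differentiableAt (by simp)).hasFDerivAt.comp_hasDerivAt t hxt
  simpa using h_deriv.clm_apply (hasDerivAt_const t w)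

theorem contDiff_curve {x : ℝ → 𝔼 n} (hx : ContDiff ℝ ∞ x) (hxU : ∀ t, x t ∈ U) :
    ContDiff ℝ ∞ (fun t => φ (x t)) :=
  hφ.contDiffOn.comp_contDiff hx hxU

theorem injective_fderiv {x : 𝔼 n} (hx : x ∈ U) : Function.Injective (fderiv ℝ φ x) := by
  have h_ρ : HasFDerivAt ρ (fderiv ℝ ρ (φ x)) (φ x) :=
    ((hφ.contDiffOn_inv.contDiffAt (hφ.isOpen_codomain.mem_nhds (hφ.mapsTo hx).2)).differentiableAt
      (by simp)).hasFDerivAt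
  have h_id : HasFDerivAt (ρ ∘ φ) (.id ℝ (𝔼 n)) x :=
    (hasFDerivAt_id x).congr_of_eventuallyEq
      (eventually_of_mem (hφ.isOpen.mem_nhds hx) fun y hy => hφ.leftInvOn hy)
  exact Function.LeftInverse.injective (g := fderiv ℝ ρ (φ x))
    (DFunLike.congr_fun ((h_ρ.comp x (hφ.hasFDerivAt hx)).unique h_id))

section Curve

variable {c : ℝ → 𝔼 D} {t : ℝ} (hc : ContDiff ℝ ∞ c) (hcS : ∀ t, c t ∈ S) (hcN : c t ∈ N)

include hc hcN

theorem contDiffAt_coord : ContDiffAt ℝ ∞ (fun s => ρ (c s)) t :=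
  (hφ.contDiffOn_inv.contDiffAt (hφ.isOpen_codomain.mem_nhds hcN)).comp t hc.contDiffAt

theorem eventually_mem : ∀ᶠ s in 𝓝 t, c s ∈ N :=
  hc.continuous.continuousAt.eventually_mem (hφ.isOpen_codomain.mem_nhds hcN)

include hcS

theorem deriv_eq : deriv c t = fderiv ℝ φ (ρ (c t)) (deriv (fun s => ρ (c s)) t) := by
  have h_eq : c =ᶠ[𝓝 t] (φ ∘ fun s => ρ (c s)) :=
    (hφ.eventually_mem hc hcN).mono fun s hs => (hφ.rightInvOn ⟨hcS s, hs⟩).symm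
  rw [h_eq.deriv_eq]
  exact ((hφ.hasFDerivAt (hφ.mapsTo_inv ⟨hcS t, hcN⟩)).comp_hasDerivAt t
    ((hφ.contDiffAt_coord hc hcN).differentiableAt (by simp)).hasDerivAt).deriv

end Curve

theorem tangentAt_eq_range {x : 𝔼 n} (hx : x ∈ U) :
    TangentAt S (φ x) = LinearMap.range (fderiv ℝ φ x : 𝔼 n →ₗ[ℝ] 𝔼 D) := by
  refine le_antisymm (Submodule.span_le.2 ?_) ?_
  · rintro v ⟨c, hc, hcS, hc₀, rfl⟩
    rw [hφ.deriv_eq hc hcS (hc₀ ▸ (hφ.mapsTo hx).2), hc₀, hφ.leftInvOn hx]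
    exact ⟨_, rfl⟩
  · rintro _ ⟨w, rfl⟩
    obtain ⟨y, hy, rfl, hy', hyU⟩ := exists_contDiff_curve_mem hφ.isOpen hx w
    exact Submodule.subset_span ⟨fun t => φ (y t), hφ.contDiff_curve hy hyU,
      fun t => (hφ.mapsTo (hyU t)).1, rfl, ((hφ.hasFDerivAt hx).comp_hasDerivAt 0 hy').deriv⟩

theorem fderiv_mem_tangentAt {x : 𝔼 n} (hx : x ∈ U) (w : 𝔼 n) :
    fderiv ℝ φ x w ∈ TangentAt S (φ x) :=
  hφ.tangentAt_eq_range hx ▸ ⟨w, rfl⟩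

end IsSmoothChart

/-! ### Normal parallel transport and parallel subbundles -/

section NormalTransport

variable {V F : Type*} [NormedAddCommGroup V] [NormedSpace ℝ V] [NormedAddCommGroup F]
  [NormedSpace ℝ F]

/-- The coefficient of the linear equation `Y' = normalTransport B φ x u Y` of normal parallel
transport along a curve in `φ` with coordinates `x` and `x' = u`: the right-hand side is the
tangent vector that keeps `Y` normal. -/
def normalTransport (B : F →L[ℝ] F →L[ℝ] ℝ) (φ : V → F) (x u : V) : F →L[ℝ] F :=
  -(fderiv ℝ φ x ∘L riesz B (fderiv ℝ φ x) ∘L restrictForm B (fderiv ℝ (fderiv ℝ φ) x u))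

theorem normalTransport_apply (B : F →L[ℝ] F →L[ℝ] ℝ) (φ : V → F) (x u : V) (f : F) :
    normalTransport B φ x u f = fderiv ℝ φ x
      (-riesz B (fderiv ℝ φ x) (restrictForm B (fderiv ℝ (fderiv ℝ φ) x u) f)) := by
  simp [normalTransport]

variable [FiniteDimensional ℝ V] {B : F →L[ℝ] F →L[ℝ] ℝ} {φ : V → F} {U : Set V} {x : V}

theorem form_normalTransport (hpos : ∀ z, z ≠ 0 → B (fderiv ℝ φ x z) (fderiv ℝ φ x z) ≠ 0)
    (u : V) (f : F) (w : V) :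
    B (normalTransport B φ x u f) (fderiv ℝ φ x w) = -B f (fderiv ℝ (fderiv ℝ φ) x u w) := by
  rw [normalTransport_apply, map_neg, map_neg, _root_.neg_apply, form_riesz hpos,
    restrictForm_apply]

theorem contDiffAt_normalTransport (hφ : ContDiffAt ℝ ∞ φ x)
    (hpos : ∀ z, z ≠ 0 → B (fderiv ℝ φ x z) (fderiv ℝ φ x z) ≠ 0) (u : V) :
    ContDiffAt ℝ ∞ (fun x => normalTransport B φ x u) x := by
  have hφ' : ContDiffAt ℝ ∞ (fderiv ℝ φ) x := hφ.fderiv_right (m := ∞) (by simp)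
  have hφ'' : ContDiffAt ℝ ∞ (fun x => fderiv ℝ (fderiv ℝ φ) x u) x :=
    (hφ'.fderiv_right (m := ∞) (by simp)).clm_apply contDiffAt_const
  exact (hφ'.clm_comp ((contDiffAt_riesz hφ' hpos).clm_comp (contDiffAt_restrictForm hφ''))).neg

theorem exists_normalTransport_solution [CompleteSpace F] (hU : IsOpen U)
    (hφ : ContDiffOn ℝ ∞ φ U)
    (hpos : ∀ y ∈ U, ∀ z, z ≠ 0 → B (fderiv ℝ φ y z) (fderiv ℝ φ y z) ≠ 0) (hx : x ∈ U) (u : V)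
    (f : F) : ∃ ε > 0, ∃ Y : ℝ → F, Y 0 = f ∧ ContDiffOn ℝ ∞ Y (Ioo (-ε) ε) ∧
      ∀ t ∈ Ioo (-ε) ε, x + t • u ∈ U ∧
        HasDerivAt Y (normalTransport B φ (x + t • u) u (Y t)) t := by
  let A : ℝ → F →L[ℝ] F := fun t => normalTransport B φ (x + t • u) u
  have hA {t : ℝ} (ht : x + t • u ∈ U) : ContDiffAt ℝ ∞ A t :=
    ContDiffAt.comp (g := fun y => normalTransport B φ y u) (f := fun t : ℝ => x + t • u) t
      (contDiffAt_normalTransport (hφ.contDiffAt (hU.mem_nhds ht)) (hpos _ ht) u) (by fun_prop)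
  have h_mem := eventually_add_smul_mem hU hx u
  obtain ⟨δ, hδ, h_ball⟩ := Metric.eventually_nhds_iff.1 h_mem
  obtain ⟨ε, hε, h_sol⟩ :=
    exists_linear_ode_solution (A := A) (h_mem.mono fun t ht => (hA ht).continuousAt)
  simp only [zero_sub, zero_add] at h_sol
  obtain ⟨Y, hY₀, hY⟩ := h_sol 0 ⟨neg_lt_zero.2 hε, hε⟩ f
  have h_line {t : ℝ} (ht : t ∈ Ioo (-min δ ε) (min δ ε)) : x + t • u ∈ U := by
    refine h_ball ?_
    rw [dist_zero_right, Real.norm_eq_abs]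
    exact (abs_lt.2 ht).trans_le (min_le_left _ _)
  have hY' {t : ℝ} (ht : t ∈ Ioo (-min δ ε) (min δ ε)) : HasDerivAt Y (A t (Y t)) t :=
    hY t (Ioo_subset_Ioo (neg_le_neg (min_le_right _ _)) (min_le_right _ _) ht)
  exact ⟨min δ ε, lt_min hδ hε, Y, hY₀,
    contDiffOn_of_linear_ode isOpen_Ioo (fun t ht => (hA (h_line ht)).contDiffWithinAt)
      fun t ht => hY' ht, fun t ht => ⟨h_line ht, hY' ht⟩⟩

end NormalTransport

theorem eq_of_hasDerivAt_zero {E : Type*} [NormedAddCommGroup E] [NormedSpace ℝ E] {f : ℝ → E}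
    {a b : ℝ} (hf : ∀ t ∈ Ioo a b, HasDerivAt f 0 t) {s t : ℝ} (hs : s ∈ Ioo a b)
    (ht : t ∈ Ioo a b) : f s = f t :=
  isOpen_Ioo.is_const_of_deriv_eq_zero isPreconnected_Ioo
    (fun r hr => (hf r hr).differentiableAt.differentiableWithinAt) (fun r hr => (hf r hr).deriv)
    hs ht

theorem tangentAt_mono {D : ℕ} {S T : Set (𝔼 D)} (h : S ⊆ T) (p : 𝔼 D) :
    TangentAt S p ≤ TangentAt T p :=
  Submodule.span_mono fun _ ⟨c, hc, hcS, hcp⟩ => ⟨c, hc, fun t => h (hcS t), hcp⟩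

namespace IsSmoothChart

variable {k : SpaceFormKind} {n D : ℕ} {S : Set (𝔼 D)} {φ : 𝔼 n → 𝔼 D} {U : Set (𝔼 n)}
  {ρ : 𝔼 D → 𝔼 n} {N : Set (𝔼 D)} (hφ : IsSmoothChart S φ U ρ N) (hS : S ⊆ spaceForm k D)
  {x : 𝔼 n}

include hφ hS

theorem curvature_mul_form_fderiv (hx : x ∈ U) (z : 𝔼 n) :
    curvature k * ambientForm k D (fderiv ℝ φ x z) (φ x) = 0 :=
  curvature_mul_ambientForm_of_mem_tangentAt (tangentAt_mono hS _ (hφ.fderiv_mem_tangentAt hx z))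

theorem anisotropic (hx : x ∈ U) (z : 𝔼 n) (hz : z ≠ 0) :
    ambientForm k D (fderiv ℝ φ x z) (fderiv ℝ φ x z) ≠ 0 :=
  (ambientForm_self_pos (hS (hφ.mapsTo hx).1) (hφ.curvature_mul_form_fderiv hS hx z)
    fun h => hz (hφ.injective_fderiv hx (h.trans (map_zero _).symm))).ne'

theorem isNormalVec_iff (hx : x ∈ U) {y : 𝔼 D} :
    IsNormalVec k S (φ x) y ↔ curvature k * ambientForm k D y (φ x) = 0 ∧
      ∀ w, ambientForm k D y (fderiv ℝ φ x w) = 0 := by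
  refine and_congr ⟨curvature_mul_ambientForm_of_mem_tangentAt,
    mem_tangentAt_spaceForm (hS (hφ.mapsTo hx).1)⟩ ?_
  rw [hφ.tangentAt_eq_range hx]
  simp [ambientForm_apply]

theorem isNormalVec_normalTransport {u : 𝔼 n} {Y : ℝ → 𝔼 D} {ε : ℝ} (hε : 0 < ε)
    (hY₀ : IsNormalVec k S (φ x) (Y 0))
    (hY : ∀ t ∈ Ioo (-ε) ε, x + t • u ∈ U ∧
      HasDerivAt Y (normalTransport (ambientForm k D) φ (x + t • u) u (Y t)) t)
    {t : ℝ} (ht : t ∈ Ioo (-ε) ε) : IsNormalVec k S (φ (x + t • u)) (Y t) := by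
  have h₀ : (0 : ℝ) ∈ Ioo (-ε) ε := ⟨neg_lt_zero.2 hε, hε⟩
  have h_line (s : ℝ) : HasDerivAt (fun s : ℝ => x + s • u) u s := by
    simpa using ((hasDerivAt_id s).smul_const u).const_add x
  have hx : x ∈ U := by simpa using (hY 0 h₀).1
  obtain ⟨h_radial₀, h_orth₀⟩ := (hφ.isNormalVec_iff hS hx).1 hY₀
  have h_orth : ∀ s ∈ Ioo (-ε) ε, ∀ w,
      ambientForm k D (Y s) (fderiv ℝ φ (x + s • u) w) = 0 := by
    intro s hs w
    have h_const : ∀ r ∈ Ioo (-ε) ε,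
        HasDerivAt (fun r => ambientForm k D (Y r) (fderiv ℝ φ (x + r • u) w)) 0 r := by
      intro r hr
      obtain ⟨hrU, hYr⟩ := hY r hr
      have h_deriv := (ambientForm k D).hasDerivAt_of_bilinear (fun _ => hYr)
        fun _ => hφ.hasDerivAt_fderiv_apply hrU (h_line r) w
      rwa [form_normalTransport (hφ.anisotropic hS hrU), add_neg_cancel] at h_deriv
    rw [eq_of_hasDerivAt_zero h_const hs h₀]
    simpa using h_orth₀ w
  have h_radial : ∀ r ∈ Ioo (-ε) ε,
      HasDerivAt (fun r => curvature k * ambientForm k D (Y r) (φ (x + r • u))) 0 r := by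
    intro r hr
    obtain ⟨hrU, hYr⟩ := hY r hr
    have hφ' : HasDerivAt (fun r => φ (x + r • u)) (fderiv ℝ φ (x + r • u) u) r :=
      (hφ.hasFDerivAt hrU).comp_hasDerivAt r (h_line r)
    have h_deriv := ((ambientForm k D).hasDerivAt_of_bilinear (fun _ => hYr)
      fun _ => hφ').const_mul (curvature k)
    rwa [h_orth r hr, zero_add, normalTransport_apply,
      hφ.curvature_mul_form_fderiv hS hrU] at h_deriv
  refine (hφ.isNormalVec_iff hS (hY t ht).1).2 ⟨?_, h_orth t ht⟩
  rw [eq_of_hasDerivAt_zero h_radial ht h₀]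
  simpa using h_radial₀

theorem exists_parallel_normal_field (hx : x ∈ U) (u : 𝔼 n) {f : 𝔼 D}
    (hf : IsNormalVec k S (φ x) f) :
    ∃ (σ : ℝ → ℝ) (ξ : ℝ → 𝔼 D), ContDiff ℝ ∞ σ ∧ σ 0 = 0 ∧ HasDerivAt σ 1 0 ∧
      ContDiff ℝ ∞ ξ ∧ ξ 0 = f ∧ ∀ t, x + σ t • u ∈ U ∧
        IsNormalVec k S (φ (x + σ t • u)) (ξ t) ∧
        deriv ξ t ∈ LinearMap.range (fderiv ℝ φ (x + σ t • u) : 𝔼 n →ₗ[ℝ] 𝔼 D) := by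
  obtain ⟨ε, hε, Y, rfl, hY_smooth, hY⟩ := exists_normalTransport_solution hφ.isOpen
    hφ.contDiffOn (fun y hy => hφ.anisotropic hS hy) hx u f
  obtain ⟨σ, hσ, hσ₀, hσ', h_mem⟩ :=
    exists_contDiff_forall_of_eventually (Ioo_mem_nhds (neg_lt_zero.2 hε) hε)
  refine ⟨σ, Y ∘ σ, hσ, hσ₀, hσ', hY_smooth.comp_contDiff hσ h_mem, congrArg Y hσ₀, fun t =>
    ⟨(hY _ (h_mem t)).1, hφ.isNormalVec_normalTransport hS hε hf hY (h_mem t), ?_⟩⟩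
  have h_deriv := (hY _ (h_mem t)).2.scomp t (hσ.differentiable (by simp) t).hasDerivAt
  rw [h_deriv.deriv, normalTransport_apply]
  exact Submodule.smul_mem _ _ ⟨_, rfl⟩

end IsSmoothChart

section Frame

variable {F : Type*} [NormedAddCommGroup F] [NormedSpace ℝ F] {m : ℕ} {ξ : Fin m → F → F}

theorem exists_smooth_frame (hξ : ∀ i, ContDiff ℝ ∞ (ξ i)) :
    ∃ Ξ : F → (Fin m → ℝ) →L[ℝ] F, ContDiff ℝ ∞ Ξ ∧
      ∀ y, (Ξ y : (Fin m → ℝ) →ₗ[ℝ] F) = Fintype.linearCombination ℝ fun i => ξ i y :=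
  ⟨fun y => ∑ i, (ContinuousLinearMap.proj i : (Fin m → ℝ) →L[ℝ] ℝ).smulRight (ξ i y),
    ContDiff.sum fun i _ => contDiff_const.smulRight (hξ i), fun y => by
      ext; simp [Fintype.linearCombination_apply]⟩

theorem exists_normalized_frame [FiniteDimensional ℝ F] (hξ : ∀ i, ContDiff ℝ ∞ (ξ i)) {p : F}
    (h_rank : finrank ℝ (Submodule.span ℝ (range fun i => ξ i p)) = m) :
    ∃ (X : F → (Fin m → ℝ) →L[ℝ] F) (L : F →L[ℝ] (Fin m → ℝ)), ∀ᶠ y in 𝓝 p,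
      ContDiffAt ℝ ∞ X y ∧ (∀ a, L (X y a) = a) ∧
      LinearMap.range (X y : (Fin m → ℝ) →ₗ[ℝ] F) = Submodule.span ℝ (range fun i => ξ i y) := by
  obtain ⟨Ξ, hΞ, hΞξ⟩ := exists_smooth_frame hξ
  have h_inj : Function.Injective (Ξ p) := by
    have h_indep : LinearIndependent ℝ fun i => ξ i p :=
      linearIndependent_iff_card_eq_finrank_span.2 (by simp [Set.finrank, h_rank])
    rw [linearIndependent_iff_injective_fintypeLinearCombination, ← hΞξ] at h_indep
    exact h_indep
  have h_left := ContinuousLinearMap.HasLeftInverse.of_injective_of_finiteDimensional h_inj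
  set L := h_left.leftInverse
  refine ⟨fun y => Ξ y ∘L (L ∘L Ξ y).inverse, L, ?_⟩
  filter_upwards [eventually_isInvertible_leftInverse_comp hΞ.continuous.continuousAt h_left]
    with y hy
  have h_inv : ContDiffAt ℝ ∞ (fun y => (L ∘L Ξ y).inverse) y :=
    ContDiffAt.comp (g := ContinuousLinearMap.inverse) (f := fun y => L ∘L Ξ y) y
      hy.contDiffAt_map_inverse (contDiff_const.clm_comp hΞ).contDiffAt
  refine ⟨hΞ.contDiffAt.clm_comp h_inv, hy.self_apply_inverse, ?_⟩
  rw [← Fintype.range_linearCombination, ← hΞξ]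
  exact LinearMap.range_comp_of_range_eq_top _ (LinearMap.range_eq_top.2 hy.inverse.surjective)

end Frame

/-- A chart `φ` of `S` together with a frame `X` of the bundle `ν₁`, parametrized by `ℝᵐ` and
normalized by the linear map `L`. -/
structure IsBundleChart {n D m : ℕ} (k : SpaceFormKind) (S : Set (𝔼 D))
    (ν₁ : 𝔼 D → Submodule ℝ (𝔼 D)) (φ : 𝔼 n → 𝔼 D) (U : Set (𝔼 n)) (ρ : 𝔼 D → 𝔼 n)
    (N : Set (𝔼 D)) (X : 𝔼 n → (Fin m → ℝ) →L[ℝ] 𝔼 D) (L : 𝔼 D →L[ℝ] (Fin m → ℝ)) : Prop where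
  isSmoothChart : IsSmoothChart S φ U ρ N
  subset_spaceForm : S ⊆ spaceForm k D
  contDiffOn_frame : ContDiffOn ℝ ∞ X U
  normalized : ∀ x ∈ U, ∀ a, L (X x a) = a
  range_frame : ∀ x ∈ U, LinearMap.range (X x : (Fin m → ℝ) →ₗ[ℝ] 𝔼 D) = ν₁ (φ x)

theorem exists_isBundleChart {k : SpaceFormKind} {n D m : ℕ} {S : Set (𝔼 D)}
    {ν₁ : 𝔼 D → Submodule ℝ (𝔼 D)} (hSF : S ⊆ spaceForm k D) (hS : IsSubmanifold S n)
    (hν : IsParallelNormalSubbundle k S ν₁ m) {p : 𝔼 D} (hp : p ∈ S) :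
    ∃ (φ : 𝔼 n → 𝔼 D) (U : Set (𝔼 n)) (ρ : 𝔼 D → 𝔼 n) (N : Set (𝔼 D))
      (X : 𝔼 n → (Fin m → ℝ) →L[ℝ] 𝔼 D) (L : 𝔼 D →L[ℝ] (Fin m → ℝ)),
      IsBundleChart k S ν₁ φ U ρ N X L ∧ p ∈ N := by
  obtain ⟨φ, U, ρ, N, hφ, hpN⟩ := exists_isSmoothChart hS hp
  obtain ⟨V, hV, ξ, hξ, h_span⟩ := hν.smooth p hp
  obtain ⟨X, L, hX⟩ := exists_normalized_frame hξ (p := p)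
    (h_span p ⟨mem_of_mem_nhds hV, hp⟩ ▸ hν.rank p hp)
  obtain ⟨N₁, hN₁, hN₁_open, hpN₁⟩ := eventually_nhds_iff.1 (hX.and hV)
  refine ⟨φ, U ∩ φ ⁻¹' N₁, ρ, N ∩ N₁, X ∘ φ, L, ⟨hφ.inter hN₁_open, hSF, fun x hx => ?_,
    fun x hx => (hN₁ _ hx.2).1.2.1, fun x hx => ?_⟩, hpN, hpN₁⟩
  · exact ((hN₁ _ hx.2).1.1.comp x
      (hφ.contDiffOn.contDiffAt (hφ.isOpen.mem_nhds hx.1))).contDiffWithinAt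
  · rw [h_span _ ⟨(hN₁ _ hx.2).2, (hφ.mapsTo hx.1).1⟩]
    exact (hN₁ _ hx.2).1.2.2

namespace IsBundleChart

variable {k : SpaceFormKind} {n D m : ℕ} {S : Set (𝔼 D)} {ν₁ : 𝔼 D → Submodule ℝ (𝔼 D)}
  {φ : 𝔼 n → 𝔼 D} {U : Set (𝔼 n)} {ρ : 𝔼 D → 𝔼 n} {N : Set (𝔼 D)}
  {X : 𝔼 n → (Fin m → ℝ) →L[ℝ] 𝔼 D} {L : 𝔼 D →L[ℝ] (Fin m → ℝ)}
  (h : IsBundleChart k S ν₁ φ U ρ N X L) {x : 𝔼 n}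

include h

theorem frame_mem (hx : x ∈ U) (a : Fin m → ℝ) : X x a ∈ ν₁ (φ x) :=
  h.range_frame x hx ▸ ⟨a, rfl⟩

theorem frame_apply_normalized (hx : x ∈ U) {f : 𝔼 D} (hf : f ∈ ν₁ (φ x)) : X x (L f) = f := by
  rw [← h.range_frame x hx] at hf
  obtain ⟨a, rfl⟩ := hf
  exact congrArg (X x) (h.normalized x hx a)

theorem hasFDerivAt_frame (hx : x ∈ U) : HasFDerivAt X (fderiv ℝ X x) x :=
  ((h.contDiffOn_frame.contDiffAt (h.isSmoothChart.isOpen.mem_nhds hx)).differentiableAt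
    (by simp)).hasFDerivAt

variable (hν : IsParallelNormalSubbundle k S ν₁ m)

include hν

theorem isNormalVec_frame (hx : x ∈ U) (a : Fin m → ℝ) : IsNormalVec k S (φ x) (X x a) :=
  hν.normal _ (h.isSmoothChart.mapsTo hx).1 _ (h.frame_mem hx a)

theorem exists_fderiv_frame_eq (hx : x ∈ U) (u : 𝔼 n) (a : Fin m → ℝ) :
    ∃ z a', fderiv ℝ X x u a = fderiv ℝ φ x z + X x a' := by
  have hφ := h.isSmoothChart
  obtain ⟨σ, ξ, hσ, hσ₀, hσ', hξ, hξ₀, h_field⟩ := hφ.exists_parallel_normal_field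
    h.subset_spaceForm hx u (h.isNormalVec_frame hν hx a)
  have h_mem (t : ℝ) : ξ t ∈ ν₁ (φ (x + σ t • u)) :=
    hν.parallel (fun t => φ (x + σ t • u)) ξ (hφ.contDiff_curve (by fun_prop) fun t =>
      (h_field t).1) (fun t => (hφ.mapsTo (h_field t).1).1) hξ (fun t => (h_field t).2.1)
      (fun t => Submodule.mem_sup_left (hφ.tangentAt_eq_range (h_field t).1 ▸ (h_field t).2.2))
      (by simpa [hσ₀, hξ₀] using h.frame_mem hx a) t
  have h_eq : ξ = fun t => X (x + σ t • u) (L (ξ t)) :=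
    funext fun t => (h.frame_apply_normalized (h_field t).1 (h_mem t)).symm
  obtain ⟨z, hz⟩ : deriv ξ 0 ∈ LinearMap.range (fderiv ℝ φ x : 𝔼 n →ₗ[ℝ] 𝔼 D) := by
    simpa [hσ₀] using (h_field 0).2.2
  have hξ' : HasDerivAt ξ (deriv ξ 0) 0 := (hξ.differentiable (by simp) 0).hasDerivAt
  have h_line : HasDerivAt (fun t => x + σ t • u) u 0 := by
    simpa using (hσ'.smul_const u).const_add x
  have hX : HasDerivAt (fun t => X (x + σ t • u)) (fderiv ℝ X x u) 0 :=
    HasFDerivAt.comp_hasDerivAt (l := X) 0 (by simpa [hσ₀] using h.hasFDerivAt_frame hx) h_line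
  have hL : HasDerivAt (fun t => L (ξ t)) (L (deriv ξ 0)) 0 := L.hasFDerivAt.comp_hasDerivAt 0 hξ'
  have h_unique : deriv ξ 0 = fderiv ℝ X x u a + X x (L (deriv ξ 0)) := by
    have h_deriv := hX.clm_apply hL
    rw [← h_eq, hξ₀, h.normalized x hx, hσ₀, zero_smul, add_zero] at h_deriv
    exact h_deriv.deriv
  refine ⟨z, -L (deriv ξ 0), ?_⟩
  rw [map_neg, ← sub_eq_add_neg, eq_sub_iff_add_eq, ← h_unique]
  exact hz.symm

theorem isAdaptedFrame : IsAdaptedFrame (ambientForm k D) U φ X L where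
  isOpen := h.isSmoothChart.isOpen
  contDiffOn := h.isSmoothChart.contDiffOn
  contDiffOn_frame := h.contDiffOn_frame
  symm := ambientForm_comm
  orthogonal _ hx a w :=
    ((h.isSmoothChart.isNormalVec_iff h.subset_spaceForm hx).1 (h.isNormalVec_frame hν hx a)).2 w
  parallel _ hx u a := h.exists_fderiv_frame_eq hν hx u a
  normalized := h.normalized
  anisotropic _ hx := h.isSmoothChart.anisotropic h.subset_spaceForm hx

end IsBundleChart

/-! ### Generalized nullity and geodesics in charts -/

namespace IsBundleChart

variable {k : SpaceFormKind} {n D m : ℕ} {S : Set (𝔼 D)} {ν₁ : 𝔼 D → Submodule ℝ (𝔼 D)}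
  {φ : 𝔼 n → 𝔼 D} {U : Set (𝔼 n)} {ρ : 𝔼 D → 𝔼 n} {N : Set (𝔼 D)}
  {X : 𝔼 n → (Fin m → ℝ) →L[ℝ] 𝔼 D} {L : 𝔼 D →L[ℝ] (Fin m → ℝ)}
  (h : IsBundleChart k S ν₁ φ U ρ N X L) (hν : IsParallelNormalSubbundle k S ν₁ m) {x u : 𝔼 n}

include h hν

theorem fderiv_frame_eq_zero_of_mem_gNullityAt (hx : x ∈ U)
    (hu : fderiv ℝ φ x u ∈ gNullityAt k S ν₁ (φ x)) : fderiv ℝ X x u = 0 := by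
  have hφ := h.isSmoothChart
  refine ((h.isAdaptedFrame hν).fderiv_frame_eq_zero_iff hx).2 fun a w => ?_
  have hXa := h.frame_mem hx a
  have h_add := (h.isAdaptedFrame hν).form_fderiv_frame_add hx a u w
  obtain ⟨y, hy, rfl, hy', hyU⟩ := exists_contDiff_curve_mem hφ.isOpen hx u
  have h_null := hu.2 (fun t => φ (y t)) (fun t => fderiv ℝ φ (y t) w)
    (hφ.contDiff_curve hy hyU) (fun t => (hφ.mapsTo (hyU t)).1) rfl
    ((hφ.hasFDerivAt hx).comp_hasDerivAt 0 hy').deriv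
    (contDiff_iff_contDiffAt.2 fun t =>
      ((hφ.contDiffAt_fderiv (hyU t)).comp t hy.contDiffAt).clm_apply contDiffAt_const)
    (fun t => hφ.fderiv_mem_tangentAt (hyU t) w) _ hXa
  rw [(hφ.hasDerivAt_fderiv_apply hx hy' w).deriv, ← ambientForm_apply, ambientForm_comm] at h_null
  rwa [h_null, add_zero] at h_add

theorem form_frame_eq_zero_of_mem_tangentAt {y v : 𝔼 D} (hyS : y ∈ S) (hyN : y ∈ N)
    (hv : v ∈ TangentAt S y) (a : Fin m → ℝ) : ambientForm k D v (X (ρ y) a) = 0 := by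
  have hy := h.isSmoothChart.mapsTo_inv ⟨hyS, hyN⟩
  rw [← h.isSmoothChart.rightInvOn ⟨hyS, hyN⟩] at hv
  rw [ambientForm_comm, ambientForm_apply]
  exact (h.isNormalVec_frame hν hy a).2 v hv

theorem fderiv_mem_gNullityAt (hx : x ∈ U) (hu : fderiv ℝ X x u = 0) :
    fderiv ℝ φ x u ∈ gNullityAt k S ν₁ (φ x) := by
  have hφ := h.isSmoothChart
  refine ⟨hφ.fderiv_mem_tangentAt hx u, fun c W hc hcS hc₀ hc' hW hWT ξ hξ => ?_⟩
  have hcN : c 0 ∈ N := hc₀ ▸ (hφ.mapsTo hx).2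
  have hρc : ρ (c 0) = x := hc₀ ▸ hφ.leftInvOn hx
  have h_coord : HasDerivAt (fun t => ρ (c t)) u 0 := by
    have h_deriv := hφ.deriv_eq hc hcS hcN
    rw [hρc, hc'] at h_deriv
    rw [hφ.injective_fderiv hx h_deriv]
    exact ((hφ.contDiffAt_coord hc hcN).differentiableAt (by simp)).hasDerivAt
  have h_frame : HasDerivAt (fun t => X (ρ (c t)) (L ξ)) 0 0 := by
    have h_comp : HasDerivAt (fun t => X (ρ (c t))) (fderiv ℝ X x u) 0 :=
      HasFDerivAt.comp_hasDerivAt (l := X) 0 (hρc.symm ▸ h.hasFDerivAt_frame hx) h_coord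
    simpa [hu] using h_comp.clm_apply (hasDerivAt_const 0 (L ξ))
  have h_form := (ambientForm k D).hasDerivAt_of_bilinear
    (fun _ => (hW.differentiable (by simp) 0).hasDerivAt) fun _ => h_frame
  have h_zero : (fun t => ambientForm k D (W t) (X (ρ (c t)) (L ξ))) =ᶠ[𝓝 0] fun _ => 0 :=
    (hφ.eventually_mem hc hcN).mono fun t ht =>
      h.form_frame_eq_zero_of_mem_tangentAt hν (hcS t) ht (hWT t) (L ξ)
  have h_eq := h_form.unique ((hasDerivAt_const 0 0).congr_of_eventuallyEq h_zero)
  rwa [map_zero, zero_add, hρc, h.frame_apply_normalized hx hξ, ambientForm_apply] at h_eq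

theorem fderiv_mem_gNullityAt_iff (hx : x ∈ U) :
    fderiv ℝ φ x u ∈ gNullityAt k S ν₁ (φ x) ↔ fderiv ℝ X x u = 0 :=
  ⟨h.fderiv_frame_eq_zero_of_mem_gNullityAt hν hx, h.fderiv_mem_gNullityAt hν hx⟩

theorem gNullityAt_eq_map (hx : x ∈ U) :
    gNullityAt k S ν₁ (φ x) =
      ((fderiv ℝ X x).ker.map (fderiv ℝ φ x : 𝔼 n →ₗ[ℝ] 𝔼 D) : Submodule ℝ (𝔼 D)) := by
  refine Subset.antisymm (fun v hv => ?_) ?_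
  · obtain ⟨u, rfl⟩ := h.isSmoothChart.tangentAt_eq_range hx ▸ hv.1
    exact ⟨u, (h.fderiv_mem_gNullityAt_iff hν hx).1 hv, rfl⟩
  · rintro _ ⟨u, hu, rfl⟩
    exact h.fderiv_mem_gNullityAt hν hx hu

theorem finrank_gNullityAt (hx : x ∈ U) :
    Set.finrank ℝ (gNullityAt k S ν₁ (φ x)) = kerDim X x := by
  rw [h.gNullityAt_eq_map hν hx, Set.finrank, Submodule.span_eq]
  exact (Submodule.equivMapOfInjective _ (h.isSmoothChart.injective_fderiv hx) _).finrank_eq.symm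

end IsBundleChart

/-- The coordinates given by `ρ` of the point and the velocity of a curve. -/
def tangentCoord {n D : ℕ} (ρ : 𝔼 D → 𝔼 n) (γ : ℝ → 𝔼 D) (t : ℝ) : 𝔼 n × 𝔼 n :=
  (ρ (γ t), deriv (fun s => ρ (γ s)) t)

namespace IsSmoothChart

variable {k : SpaceFormKind} {n D : ℕ} {S : Set (𝔼 D)} {φ : 𝔼 n → 𝔼 D} {U : Set (𝔼 n)}
  {ρ : 𝔼 D → 𝔼 n} {N : Set (𝔼 D)} (hφ : IsSmoothChart S φ U ρ N) {γ : ℝ → 𝔼 D} {t : ℝ}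

include hφ

theorem hasDerivAt_coord (hγ : ContDiff ℝ ∞ γ) (hγN : γ t ∈ N) :
    HasDerivAt (fun s => ρ (γ s)) (deriv (fun s => ρ (γ s)) t) t :=
  ((hφ.contDiffAt_coord hγ hγN).differentiableAt (by simp)).hasDerivAt

theorem hasDerivAt_deriv_coord (hγ : ContDiff ℝ ∞ γ) (hγN : γ t ∈ N) :
    HasDerivAt (deriv fun s => ρ (γ s)) (deriv (deriv fun s => ρ (γ s)) t) t :=
  (((hφ.contDiffAt_coord hγ hγN).derivWithin (m := ∞) (by simp)).differentiableAt
    (by simp)).hasDerivAt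

theorem deriv_deriv_eq (hγ : ContDiff ℝ ∞ γ) (hγS : ∀ t, γ t ∈ S) (hγN : γ t ∈ N) :
    deriv (deriv γ) t =
      fderiv ℝ (fderiv ℝ φ) (ρ (γ t)) (deriv (fun s => ρ (γ s)) t) (deriv (fun s => ρ (γ s)) t) +
        fderiv ℝ φ (ρ (γ t)) (deriv (deriv fun s => ρ (γ s)) t) := by
  have h_eq : deriv γ =ᶠ[𝓝 t] fun s => fderiv ℝ φ (ρ (γ s)) (deriv (fun s => ρ (γ s)) s) :=
    (hφ.eventually_mem hγ hγN).mono fun s hs => hφ.deriv_eq hγ hγS hs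
  have h_fderiv := ((hφ.contDiffAt_fderiv (hφ.mapsTo_inv ⟨hγS t, hγN⟩)).differentiableAt
    (by simp)).hasFDerivAt.comp_hasDerivAt t (hφ.hasDerivAt_coord hγ hγN)
  exact h_eq.deriv_eq.trans (h_fderiv.clm_apply (hφ.hasDerivAt_deriv_coord hγ hγN)).deriv

theorem eventually_hasDerivAt_tangentCoord (hS : S ⊆ spaceForm k D) (hγ : IsGeodesicOn k S γ)
    {b : ℝ} (hb : γ b ∈ N) :
    ∀ᶠ t in 𝓝 b, HasDerivAt (tangentCoord ρ γ)
      (sprayField (geodesicAccel (ambientForm k D) φ) (tangentCoord ρ γ t)) t := by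
  filter_upwards [hφ.eventually_mem hγ.smooth hb] with t ht
  have hx : ρ (γ t) ∈ U := hφ.mapsTo_inv ⟨hγ.mem t, ht⟩
  have h_normal : orthCoord (ambientForm k D) (fderiv ℝ φ (ρ (γ t))) (deriv (deriv γ) t) = 0 :=
    orthCoord_eq_zero fun w => by
      have hw := hφ.fderiv_mem_tangentAt hx w
      rw [hφ.rightInvOn ⟨hγ.mem t, ht⟩] at hw
      rw [ambientForm_apply]
      exact hγ.accel_normal t _ hw
  rw [hφ.deriv_deriv_eq hγ.smooth hγ.mem ht, map_add,
    orthCoord_apply_self (hφ.anisotropic hS hx)] at h_normal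
  refine ((hφ.hasDerivAt_coord hγ.smooth ht).prodMk
    (hφ.hasDerivAt_deriv_coord hγ.smooth ht)).congr_deriv (Prod.ext rfl ?_)
  exact (neg_eq_of_add_eq_zero_right h_normal).symm

end IsSmoothChart

/-! ### Propagation along geodesics -/

section Propagation

variable {k : SpaceFormKind} {n D m : ℕ} {S : Set (𝔼 D)} {ν₁ : 𝔼 D → Submodule ℝ (𝔼 D)}

/-- The total space of the generalized nullity distribution over the points where its rank is
minimal, as a set of pairs of a point and a tangent vector. -/
def minNullityBundle {D : ℕ} (k : SpaceFormKind) (S : Set (𝔼 D))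
    (ν₁ : 𝔼 D → Submodule ℝ (𝔼 D)) : Set (𝔼 D × 𝔼 D) :=
  {z | z.1 ∈ gMinNullitySet k S ν₁ ∧ z.2 ∈ gNullityAt k S ν₁ z.1}

theorem smul_mem_gNullityAt (hSF : S ⊆ spaceForm k D) (hS : IsSubmanifold S n)
    (hν : IsParallelNormalSubbundle k S ν₁ m) {y v : 𝔼 D} (hy : y ∈ S)
    (hv : v ∈ gNullityAt k S ν₁ y) (a : ℝ) : a • v ∈ gNullityAt k S ν₁ y := by
  obtain ⟨φ, U, ρ, N, X, L, h, hyN⟩ := exists_isBundleChart hSF hS hν hy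
  have hφ := h.isSmoothChart
  rw [← hφ.rightInvOn ⟨hy, hyN⟩, h.gNullityAt_eq_map hν (hφ.mapsTo_inv ⟨hy, hyN⟩)] at hv ⊢
  exact Submodule.smul_mem _ a hv

theorem neg_mem_minNullityBundle (hSF : S ⊆ spaceForm k D) (hS : IsSubmanifold S n)
    (hν : IsParallelNormalSubbundle k S ν₁ m) {y v : 𝔼 D}
    (h : (y, v) ∈ minNullityBundle k S ν₁) : (y, -v) ∈ minNullityBundle k S ν₁ :=
  ⟨h.1, by simpa using smul_mem_gNullityAt hSF hS hν h.1.1 h.2 (-1)⟩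

theorem isGeodesicOn_comp_neg {γ : ℝ → 𝔼 D} (hγ : IsGeodesicOn k S γ) :
    IsGeodesicOn k S (fun t => γ (-t)) where
  smooth := hγ.smooth.comp contDiff_neg
  mem t := hγ.mem (-t)
  accel_normal t := by
    have h_deriv : deriv (fun s => γ (-s)) = fun s => -deriv γ (-s) :=
      funext (deriv_comp_neg γ)
    rw [h_deriv, deriv.fun_neg, deriv_comp_neg (deriv γ), neg_neg]
    exact hγ.accel_normal (-t)

namespace IsBundleChart

variable {φ : 𝔼 n → 𝔼 D} {U : Set (𝔼 n)} {ρ : 𝔼 D → 𝔼 n} {N : Set (𝔼 D)}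
  {X : 𝔼 n → (Fin m → ℝ) →L[ℝ] 𝔼 D} {L : 𝔼 D →L[ℝ] (Fin m → ℝ)}
  (h : IsBundleChart k S ν₁ φ U ρ N X L) (hν : IsParallelNormalSubbundle k S ν₁ m)

include h hν

theorem mem_minNullityBundle_iff {γ : ℝ → 𝔼 D} (hγ : ContDiff ℝ ∞ γ) (hγS : ∀ t, γ t ∈ S) {t : ℝ}
    (ht : γ t ∈ N) :
    (γ t, deriv γ t) ∈ minNullityBundle k S ν₁ ↔
      (∀ r ∈ S, kerDim X (tangentCoord ρ γ t).1 ≤ Set.finrank ℝ (gNullityAt k S ν₁ r)) ∧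
        tangentDeriv X (tangentCoord ρ γ t) = 0 := by
  have hφ := h.isSmoothChart
  have hx : ρ (γ t) ∈ U := hφ.mapsTo_inv ⟨hγS t, ht⟩
  have h_eq : φ (ρ (γ t)) = γ t := hφ.rightInvOn ⟨hγS t, ht⟩
  have h_rank := h.finrank_gNullityAt hν hx
  have h_null := h.fderiv_mem_gNullityAt_iff hν hx (u := deriv (fun s => ρ (γ s)) t)
  rw [h_eq] at h_rank
  rw [h_eq, ← hφ.deriv_eq hγ hγS ht] at h_null
  simp only [minNullityBundle, gMinNullitySet, mem_ofPred_eq, hγS t, true_and, h_rank, h_null,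
    tangentCoord, tangentDeriv]

theorem isLocalMin_kerDim {x : 𝔼 n} (hx : x ∈ U)
    (hmin : ∀ r ∈ S, kerDim X x ≤ Set.finrank ℝ (gNullityAt k S ν₁ r)) :
    IsLocalMin (kerDim X) x := by
  filter_upwards [h.isSmoothChart.isOpen.mem_nhds hx] with y hy
  rw [← h.finrank_gNullityAt hν hy]
  exact hmin _ (h.isSmoothChart.mapsTo hy).1

theorem isKernelSpray : IsKernelSpray X (geodesicAccel (ambientForm k D) φ) U :=
  (h.isAdaptedFrame hν).isKernelSpray

end IsBundleChart

variable (hSF : S ⊆ spaceForm k D) (hS : IsSubmanifold S n)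
  (hν : IsParallelNormalSubbundle k S ν₁ m) {γ : ℝ → 𝔼 D} (hγ : IsGeodesicOn k S γ)

include hSF hS hν hγ

theorem eventually_mem_minNullityBundle {t : ℝ}
    (ht : (γ t, deriv γ t) ∈ minNullityBundle k S ν₁) :
    ∀ᶠ s in 𝓝[>] t, (γ s, deriv γ s) ∈ minNullityBundle k S ν₁ := by
  obtain ⟨φ, U, ρ, N, X, L, h, htN⟩ := exists_isBundleChart hSF hS hν (hγ.mem t)
  have hφ := h.isSmoothChart
  have hx : ρ (γ t) ∈ U := hφ.mapsTo_inv ⟨hγ.mem t, htN⟩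
  obtain ⟨hmin, h₀⟩ := (h.mem_minNullityBundle_iff hν hγ.smooth hγ.mem htN).1 ht
  have h_zero := (h.isKernelSpray hν).eventually_tangentDeriv_eq_zero
    (hφ.eventually_hasDerivAt_tangentCoord hSF hγ htN) hx (h.isLocalMin_kerDim hν hx hmin) h₀
  have h_rank : ∀ᶠ s in 𝓝 t, kerDim X (ρ (γ s)) ≤ kerDim X (ρ (γ t)) :=
    (hφ.contDiffAt_coord hγ.smooth htN).continuousAt.eventually
      (finrank_ker_eventually_le ((h.isKernelSpray hν).contDiffAt_fderiv hx).continuousAt)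
  filter_upwards [nhdsWithin_mono t Ioi_subset_Ici_self h_zero, nhdsWithin_le_nhds h_rank,
    nhdsWithin_le_nhds (hφ.eventually_mem hγ.smooth htN)] with s hs hs_rank hsN
  exact (h.mem_minNullityBundle_iff hν hγ.smooth hγ.mem hsN).2
    ⟨fun r hr => hs_rank.trans (hmin r hr), hs⟩

theorem mem_minNullityBundle_of_eventually_lt {b : ℝ}
    (hb : ∀ᶠ t in 𝓝[<] b, (γ t, deriv γ t) ∈ minNullityBundle k S ν₁) :
    (γ b, deriv γ b) ∈ minNullityBundle k S ν₁ := by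
  obtain ⟨φ, U, ρ, N, X, L, h, hbN⟩ := exists_isBundleChart hSF hS hν (hγ.mem b)
  have hφ := h.isSmoothChart
  have hG := h.isKernelSpray hν
  have hx : ρ (γ b) ∈ U := hφ.mapsTo_inv ⟨hγ.mem b, hbN⟩
  have hz := hφ.eventually_hasDerivAt_tangentCoord hSF hγ hbN
  have hN := hφ.eventually_mem hγ.smooth hbN
  have hreg : ∀ᶠ t in 𝓝[<] b,
      (∀ r ∈ S, kerDim X (tangentCoord ρ γ t).1 ≤ Set.finrank ℝ (gNullityAt k S ν₁ r)) ∧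
        tangentDeriv X (tangentCoord ρ γ t) = 0 := by
    filter_upwards [hb, nhdsWithin_le_nhds hN] with t ht htN
    exact (h.mem_minNullityBundle_iff hν hγ.smooth hγ.mem htN).1 ht
  have h_rank := hG.eventually_kerDim_limit_le hz hx <| by
    filter_upwards [hreg, nhdsWithin_le_nhds hN] with t ht htN
    exact ⟨h.isLocalMin_kerDim hν (hφ.mapsTo_inv ⟨hγ.mem t, htN⟩) ht.1, ht.2⟩
  have h_cont : ContinuousAt (fun t => tangentDeriv X (tangentCoord ρ γ t)) b :=
    ContinuousAt.comp (g := tangentDeriv X) (hG.contDiffOn_tangentDeriv.contDiffAt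
      ((hG.isOpen.prod isOpen_univ).mem_nhds ⟨hx, mem_univ _⟩)).continuousAt
      hz.self_of_nhds.continuousAt
  obtain ⟨t, ht_rank, ht⟩ := (h_rank.and hreg).exists
  refine (h.mem_minNullityBundle_iff hν hγ.smooth hγ.mem hbN).2
    ⟨fun r hr => ht_rank.trans (ht.1 r hr), ?_⟩
  exact tendsto_nhds_unique_of_eventuallyEq (h_cont.mono_left nhdsWithin_le_nhds)
    tendsto_const_nhds (hreg.mono fun s hs => hs.2)

theorem mem_minNullityBundle_of_nonneg (h₀ : (γ 0, deriv γ 0) ∈ minNullityBundle k S ν₁) {t : ℝ}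
    (ht : 0 ≤ t) : (γ t, deriv γ t) ∈ minNullityBundle k S ν₁ := by
  refine real_induction_Ici h₀
    (fun _ _ hs => eventually_mem_minNullityBundle hSF hS hν hγ hs) (fun b hb hlt => ?_) ht
  refine mem_minNullityBundle_of_eventually_lt hSF hS hν hγ ?_
  filter_upwards [Ico_mem_nhdsLT hb] with s hs using hlt s hs

theorem geodesic_mem_minNullityBundle (h₀ : (γ 0, deriv γ 0) ∈ minNullityBundle k S ν₁) (t : ℝ) :
    (γ t, deriv γ t) ∈ minNullityBundle k S ν₁ := by
  rcases le_total 0 t with ht | ht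
  · exact mem_minNullityBundle_of_nonneg hSF hS hν hγ h₀ ht
  · have h_rev := mem_minNullityBundle_of_nonneg hSF hS hν (isGeodesicOn_comp_neg hγ)
      (by simpa [deriv_comp_neg] using neg_mem_minNullityBundle hSF hS hν h₀) (neg_nonneg.2 ht)
    simpa [deriv_comp_neg] using neg_mem_minNullityBundle hSF hS hν h_rev

end Propagation

/-! ### Concatenation of curves -/

section Concatenation

variable {E : Type*} [NormedAddCommGroup E] {c γ : ℝ → E}

/-- The concatenation of `c` from time `0` to time `1` with `γ` from time `0` to time `T`, for
`c 1 = γ 0`. The reparametrization is stationary at the junction, which makes the sum smooth. -/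
def smoothConcat (c γ : ℝ → E) (T t : ℝ) : E :=
  c (Real.smoothTransition (2 * t)) + γ (T * Real.smoothTransition (2 * t - 1)) - γ 0

theorem smoothConcat_of_le (T : ℝ) {t : ℝ} (ht : t ≤ 1 / 2) :
    smoothConcat c γ T t = c (Real.smoothTransition (2 * t)) := by
  simp [smoothConcat, Real.smoothTransition.zero_of_nonpos (show 2 * t - 1 ≤ 0 by linarith)]

theorem smoothConcat_of_ge (h : c 1 = γ 0) (T : ℝ) {t : ℝ} (ht : 1 / 2 ≤ t) :
    smoothConcat c γ T t = γ (T * Real.smoothTransition (2 * t - 1)) := by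
  simp [smoothConcat, Real.smoothTransition.one_of_one_le (show 1 ≤ 2 * t by linarith), h]

variable [NormedSpace ℝ E]

theorem deriv_smoothTransition_of_nonpos {t : ℝ} (ht : t ≤ 0) :
    deriv Real.smoothTransition t = 0 :=
  IsLocalMin.deriv_eq_zero <| Eventually.of_forall fun s => by
    rw [Real.smoothTransition.zero_of_nonpos ht]
    exact Real.smoothTransition.nonneg s

theorem deriv_smoothTransition_of_one_le {t : ℝ} (ht : 1 ≤ t) :
    deriv Real.smoothTransition t = 0 :=
  IsLocalMax.deriv_eq_zero <| Eventually.of_forall fun s => by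
    rw [Real.smoothTransition.one_of_one_le ht]
    exact Real.smoothTransition.le_one s

theorem contDiff_smoothConcat (hc : ContDiff ℝ ∞ c) (hγ : ContDiff ℝ ∞ γ) (T : ℝ) :
    ContDiff ℝ ∞ (smoothConcat c γ T) := by
  have h_step : ContDiff ℝ ∞ Real.smoothTransition := Real.smoothTransition.contDiff
  exact ((hc.comp (h_step.comp (by fun_prop))).add
    (hγ.comp (contDiff_const.mul (h_step.comp (by fun_prop))))).sub contDiff_const

theorem deriv_smoothConcat (hc : ContDiff ℝ ∞ c) (hγ : ContDiff ℝ ∞ γ) (T t : ℝ) :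
    deriv (smoothConcat c γ T) t =
      (deriv Real.smoothTransition (2 * t) * 2) • deriv c (Real.smoothTransition (2 * t)) +
        (T * (deriv Real.smoothTransition (2 * t - 1) * 2)) •
          deriv γ (T * Real.smoothTransition (2 * t - 1)) := by
  have h_step (s : ℝ) : HasDerivAt Real.smoothTransition (deriv Real.smoothTransition s) s :=
    (Real.smoothTransition.contDiff.differentiable one_ne_zero s).hasDerivAt
  have h_two : HasDerivAt (fun s : ℝ => 2 * s) 2 t := by
    simpa using (hasDerivAt_id t).const_mul (2 : ℝ)
  have h_c := (hc.differentiable (by simp) _).hasDerivAt.scomp t ((h_step (2 * t)).comp t h_two)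
  have h_γ := (hγ.differentiable (by simp) _).hasDerivAt.scomp t
    (((h_step (2 * t - 1)).comp t (h_two.sub_const 1)).const_mul T)
  exact ((h_c.add h_γ).sub_const (γ 0)).deriv

theorem deriv_smoothConcat_of_le (hc : ContDiff ℝ ∞ c) (hγ : ContDiff ℝ ∞ γ) (T : ℝ) {t : ℝ}
    (ht : t ≤ 1 / 2) :
    ∃ a : ℝ, deriv (smoothConcat c γ T) t = a • deriv c (Real.smoothTransition (2 * t)) := by
  refine ⟨deriv Real.smoothTransition (2 * t) * 2, ?_⟩
  simp [deriv_smoothConcat hc hγ,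
    deriv_smoothTransition_of_nonpos (show 2 * t - 1 ≤ 0 by linarith)]

theorem deriv_smoothConcat_of_ge (hc : ContDiff ℝ ∞ c) (hγ : ContDiff ℝ ∞ γ) (T : ℝ) {t : ℝ}
    (ht : 1 / 2 ≤ t) :
    ∃ a : ℝ, deriv (smoothConcat c γ T) t =
      a • deriv γ (T * Real.smoothTransition (2 * t - 1)) := by
  refine ⟨T * (deriv Real.smoothTransition (2 * t - 1) * 2), ?_⟩
  simp [deriv_smoothConcat hc hγ, deriv_smoothTransition_of_one_le (show 1 ≤ 2 * t by linarith)]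

end Concatenation

/-! ### Leaves -/

variable {k : SpaceFormKind} {n D m : ℕ} {S : Set (𝔼 D)} {ν₁ : 𝔼 D → Submodule ℝ (𝔼 D)}

theorem mem_gLeafThrough_of_curve (hSF : S ⊆ spaceForm k D) (hS : IsSubmanifold S n)
    (hν : IsParallelNormalSubbundle k S ν₁ m) {p : 𝔼 D} {γ : ℝ → 𝔼 D}
    (h₀ : γ 0 ∈ gLeafThrough k S ν₁ (gMinNullitySet k S ν₁) p) (hγ : ContDiff ℝ ∞ γ)
    (hγ_mem : ∀ t, (γ t, deriv γ t) ∈ minNullityBundle k S ν₁) (T : ℝ) :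
    γ T ∈ gLeafThrough k S ν₁ (gMinNullitySet k S ν₁) p := by
  obtain ⟨c, hc, hc_min, hc_null, rfl, hc₁⟩ := h₀
  have h_mem (t : ℝ) :
      (smoothConcat c γ T t, deriv (smoothConcat c γ T) t) ∈ minNullityBundle k S ν₁ := by
    rcases le_total t (1 / 2) with ht | ht
    · obtain ⟨a, ha⟩ := deriv_smoothConcat_of_le hc hγ T ht
      rw [ha, smoothConcat_of_le T ht]
      exact ⟨hc_min _, smul_mem_gNullityAt hSF hS hν (hc_min _).1 (hc_null _) a⟩
    · obtain ⟨a, ha⟩ := deriv_smoothConcat_of_ge hc hγ T ht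
      rw [ha, smoothConcat_of_ge hc₁ T ht]
      exact ⟨(hγ_mem _).1, smul_mem_gNullityAt hSF hS hν (hγ_mem _).1.1 (hγ_mem _).2 a⟩
  refine ⟨smoothConcat c γ T, contDiff_smoothConcat hc hγ T, fun t => (h_mem t).1,
    fun t => (h_mem t).2, ?_, ?_⟩
  · rw [smoothConcat_of_le T (by norm_num), mul_zero, Real.smoothTransition.zero]
  · rw [smoothConcat_of_ge hc₁ T (by norm_num)]
    norm_num

theorem gLeafThrough_subset {A : Set (𝔼 D)} {p : 𝔼 D} : gLeafThrough k S ν₁ A p ⊆ A := by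
  rintro _ ⟨c, -, hcA, -, -, rfl⟩
  exact hcA 1

end GeneralizedNullity

/-- **Completeness of the leaves of the generalized nullity distribution.**
Let `M = S` be a complete Riemannian manifold isometrically immersed as an `n`-dimensional
submanifold of a space form, and let `ν₁` be a parallel sub-bundle of the normal bundle of `M`
(parallel with respect to the normal connection).  Let `𝒩¹_p` be the common kernel of the shape
operators `A_ξ`, `ξ ∈ ν₁(p)`.  Then every maximal integral manifold of `𝒩¹` through a point where
`dim 𝒩¹` attains its minimal value over `M` is a complete Riemannian manifold with the induced
metric: every geodesic initial condition tangent to the leaf gives rise to a geodesic of `M`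
defined on all of `ℝ` and remaining inside the leaf. -/
theorem generalized_nullity_leaf_complete (k : SpaceFormKind) (n codim m : ℕ)
    (S : Set (EuclideanSpace ℝ (Fin (ambientDim k n codim))))
    (ν₁ : EuclideanSpace ℝ (Fin (ambientDim k n codim)) →
      Submodule ℝ (EuclideanSpace ℝ (Fin (ambientDim k n codim))))
    (hSF : S ⊆ spaceForm k (ambientDim k n codim))
    (hsub : IsSubmanifold S n)
    (hcomplete : GeodComplete k S)
    (hbundle : IsParallelNormalSubbundle k S ν₁ m)
    (p : EuclideanSpace ℝ (Fin (ambientDim k n codim)))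
    (hp : p ∈ gMinNullitySet k S ν₁) :
    ∀ q ∈ gLeafThrough k S ν₁ (gMinNullitySet k S ν₁) p, ∀ v ∈ gNullityAt k S ν₁ q,
      ∃ γ : ℝ → EuclideanSpace ℝ (Fin (ambientDim k n codim)),
        IsGeodesicOn k S γ ∧ γ 0 = q ∧ deriv γ 0 = v ∧
        ∀ t, γ t ∈ gLeafThrough k S ν₁ (gMinNullitySet k S ν₁) p := by
  intro q hq v hv
  have hq_min := GeneralizedNullity.gLeafThrough_subset hq
  obtain ⟨γ, hγ, rfl, rfl⟩ := hcomplete q hq_min.1 v hv.1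
  exact ⟨γ, hγ, rfl, rfl, GeneralizedNullity.mem_gLeafThrough_of_curve hSF hsub hbundle hq
    hγ.smooth (GeneralizedNullity.geodesic_mem_minNullityBundle hSF hsub hbundle hγ ⟨hq_min, hv⟩)⟩
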